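/- Every quasidisk satisfies the quasihyperbolic boundary condition: if f is a quasiconformal mapping of ℂ onto itself and D = f(𝔻) is the image of the unit disc, then D satisfies the quasihyperbolic boundary condition. -/

import Mathlib

open Complex Metric MeasureTheory Filter Topology Set
open scoped ENNReal NNReal

noncomputable section

/-- The supremum of products of mutual distances of `n`-tuples of points of `E`
(the quantity `V_n` in the definition of the transfinite diameter). -/
noncomputable def diamProd (E : Set ℂ) (n : ℕ) : ℝ≥0∞ :=
  ⨆ (z : Fin n → ℂ) (_ : ∀ i, z i ∈ E),
    ∏ p ∈ Finset.univ.filter (fun p : Fin n × Fin n => p.1 < p.2), edist (z p.1) (z p.2)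

/-- The logarithmic capacity of a (bounded) set, defined as its transfinite diameter
`lim_n V_n^{2/(n(n-1))}` (realized via `limsup`). -/
noncomputable def logCap (E : Set ℂ) : ℝ≥0∞ :=
  Filter.limsup (fun n : ℕ => diamProd E n ^ ((2 : ℝ) / ((n : ℝ) * ((n : ℝ) - 1))))
    Filter.atTop

/-- A set is measurable with respect to logarithmic capacity if its inner capacity
(sup of capacities of compact subsets) equals its outer capacity
(inf of capacities of open supersets). -/
def CapMeasurableSet (E : Set ℂ) : Prop :=
  (⨆ (F : Set ℂ) (_ : IsCompact F) (_ : F ⊆ E), logCap F) =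
    (⨅ (U : Set ℂ) (_ : IsOpen U) (_ : E ⊆ U), logCap U)

/-- A function defined on `E ⊆ ℂ` is measurable with respect to logarithmic capacity if
preimages of open sets are measurable with respect to logarithmic capacity. -/
def CapMeasFunOn {X : Type*} [TopologicalSpace X] (E : Set ℂ) (f : ℂ → X) : Prop :=
  ∀ O : Set X, IsOpen O → CapMeasurableSet {z | z ∈ E ∧ f z ∈ O}

/-- `P` holds quasi-everywhere on `E`: the exceptional set has logarithmic capacity zero. -/
def QEOn (E : Set ℂ) (P : ℂ → Prop) : Prop :=
  logCap {z | z ∈ E ∧ ¬ P z} = 0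

/-- The unit circle `∂𝔻`. -/
def unitCircle : Set ℂ := Metric.sphere 0 1

/-- Variation of `f` along the parametrized arc `p` over parameters in `I`. -/
noncomputable def varAlong {E : Type*} [SeminormedAddCommGroup E]
    (f : ℂ → E) (p : ℝ → ℂ) (I : Set ℝ) : ℝ≥0∞ :=
  ⨆ (k : ℕ) (t : Fin (k + 1) → ℝ) (_ : Monotone t) (_ : ∀ i, t i ∈ I),
    ∑ i : Fin k, (‖f (p (t i.succ)) - f (p (t i.castSucc))‖₊ : ℝ≥0∞)

/-- Cyclic variation of `f` on the unit circle: the supremum of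
`∑ⱼ ‖f(ζ_{j+1}) - f(ζ_j)‖` over all finite collections of points of `∂𝔻` in cyclic order
(realized by monotone angle parameters running over at most one full turn). -/
noncomputable def circleVar {E : Type*} [SeminormedAddCommGroup E] (f : ℂ → E) : ℝ≥0∞ :=
  ⨆ (k : ℕ) (t : Fin (k + 1) → ℝ) (_ : Monotone t)
    (_ : t (Fin.last k) ≤ t 0 + 2 * Real.pi),
    ∑ i : Fin k, (‖f (circleMap 0 1 (t i.succ)) - f (circleMap 0 1 (t i.castSucc))‖₊ : ℝ≥0∞)

/-- `A` is a subarc of the curve `Γ` on which `f` has bounded variation. -/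
def IsBVArcOn {E : Type*} [SeminormedAddCommGroup E] (f : ℂ → E) (Γ A : Set ℂ) : Prop :=
  A ⊆ Γ ∧ ∃ (p : ℝ → ℂ) (I : Set ℝ), I.OrdConnected ∧ ContinuousOn p I ∧
    Set.InjOn p I ∧ p '' I = A ∧ varAlong f p I < ⊤

/-- `f` is of countable bounded variation on the curve `Γ`: there are countably many
mutually disjoint arcs of `Γ` on each of which `f` has bounded variation, whose complement
in `Γ` has logarithmic capacity zero. -/
def CBVOn {E : Type*} [SeminormedAddCommGroup E] (f : ℂ → E) (Γ : Set ℂ) : Prop :=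
  ∃ γ : ℕ → Set ℂ, (Pairwise fun m n => Disjoint (γ m) (γ n)) ∧
    (∀ n, IsBVArcOn f Γ (γ n)) ∧ logCap (Γ \ ⋃ n, γ n) = 0

/-- The open sector (angle) with vertex `ζ`, direction `e` and half-opening `a`. -/
def Sector (ζ e : ℂ) (a : ℝ) : Set ℂ :=
  {z | z ≠ ζ ∧ |Complex.arg ((z - ζ) / e)| < a}

/-- `f` has angular (nontangential) limit `L` at the boundary point `ζ` of `D`:
along every angle with vertex `ζ` lying in `D` near `ζ`, `f` tends to `L`. -/
def AngularLimit {X : Type*} [TopologicalSpace X] (f : ℂ → X) (D : Set ℂ) (ζ : ℂ)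
    (L : X) : Prop :=
  ∀ (e : ℂ) (a r : ℝ), e ≠ 0 → 0 < a → a < Real.pi / 2 → 0 < r →
    Sector ζ e a ∩ Metric.ball ζ r ⊆ D →
    Filter.Tendsto f (𝓝[Sector ζ e a ∩ Metric.ball ζ r] ζ) (𝓝 L)

/-- `u` is harmonic on `D`. -/
def IsHarmonicOn (u : ℂ → ℝ) (D : Set ℂ) : Prop :=
  ContDiffOn ℝ 2 u D ∧ ∀ z ∈ D,
    fderiv ℝ (fun w => fderiv ℝ u w 1) z 1
      + fderiv ℝ (fun w => fderiv ℝ u w Complex.I) z Complex.I = 0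

/-- The curve `Γ` has tangent line at `ζ` in the direction `e`. -/
def HasTangentVia (Γ : Set ℂ) (ζ e : ℂ) : Prop :=
  e ≠ 0 ∧ Filter.Tendsto
    (fun z => Metric.infDist z {w : ℂ | ∃ t : ℝ, w = ζ + t • e} / ‖z - ζ‖)
    (𝓝[Γ \ {ζ}] ζ) (𝓝 0)

/-- The curve `Γ` has a tangent at `ζ`. -/
def HasTangentAt (Γ : Set ℂ) (ζ : ℂ) : Prop := ∃ e : ℂ, HasTangentVia Γ ζ e

/-- `D` is a Jordan domain: a bounded domain whose boundary is a Jordan curve. -/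
def IsJordanDomain (D : Set ℂ) : Prop :=
  IsOpen D ∧ IsConnected D ∧ Bornology.IsBounded D ∧
    Nonempty ((Metric.sphere (0 : ℂ) 1) ≃ₜ (frontier D))

/-- The quasihyperbolic distance in `D`: the infimum of `∫ ds / d(ζ, ∂D)` over
(rectifiable, here Lipschitz-parametrized) curves joining `z` and `w` in `D`. -/
noncomputable def qhDist (D : Set ℂ) (z w : ℂ) : ℝ :=
  sInf {L : ℝ | ∃ γ : ℝ → ℂ, (∃ K : ℝ≥0, LipschitzOnWith K γ (Set.Icc 0 1)) ∧
    (∀ t ∈ Set.Icc (0 : ℝ) 1, γ t ∈ D) ∧ γ 0 = z ∧ γ 1 = w ∧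
    L = ∫ t in (0 : ℝ)..1, ‖deriv γ t‖ / Metric.infDist (γ t) (frontier D)}

/-- `D` satisfies the quasihyperbolic boundary condition. -/
def QHBC (D : Set ℂ) : Prop :=
  ∃ (a b : ℝ) (z₀ : ℂ), z₀ ∈ D ∧ ∀ z ∈ D,
    qhDist D z z₀ ≤
      a * Real.log (Metric.infDist z₀ (frontier D) / Metric.infDist z (frontier D)) + b

/-- `D` satisfies the (A)-condition of Ladyzhenskaya–Ural'tseva. -/
def ACondition (D : Set ℂ) : Prop :=
  ∃ Θ₀ ∈ Set.Ioo (0 : ℝ) 1, ∃ ρ₀ ∈ Set.Ioo (0 : ℝ) 1,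
    ∀ ζ ∈ frontier D, ∀ ρ : ℝ, 0 < ρ → ρ ≤ ρ₀ →
      volume (D ∩ Metric.ball ζ ρ) ≤ ENNReal.ofReal Θ₀ * volume (Metric.ball ζ ρ)

/-- `g₁, g₂` are the first generalized (weak) partial derivatives of `f` on `D`. -/
def HasWeakPartialsOn (f g₁ g₂ : ℂ → ℂ) (D : Set ℂ) : Prop :=
  MeasureTheory.LocallyIntegrableOn f D volume ∧
  MeasureTheory.LocallyIntegrableOn g₁ D volume ∧
  MeasureTheory.LocallyIntegrableOn g₂ D volume ∧
  ∀ φ : ℂ → ℝ, ContDiff ℝ (⊤ : ℕ∞) φ → HasCompactSupport φ → tsupport φ ⊆ D →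
    (∫ z in D, f z * (fderiv ℝ φ z 1 : ℂ)) = -(∫ z in D, g₁ z * (φ z : ℂ)) ∧
    (∫ z in D, f z * (fderiv ℝ φ z Complex.I : ℂ)) = -(∫ z in D, g₂ z * (φ z : ℂ))

/-- `f` is a regular solution of the Beltrami equation `f_z̄ = μ f_z` on `D`:
continuous, discrete, open, with first generalized derivatives satisfying the
equation almost everywhere. -/
def IsRegularBeltramiSolution (μ : ℂ → ℂ) (f : ℂ → ℂ) (D : Set ℂ) : Prop :=
  ContinuousOn f D ∧
  (∀ w : ℂ, ∀ z ∈ D, f z = w → 𝓝[(D ∩ f ⁻¹' {w}) \ {z}] z = ⊥) ∧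
  (∀ U : Set ℂ, U ⊆ D → IsOpen U → IsOpen (f '' U)) ∧
  ∃ g₁ g₂ : ℂ → ℂ, HasWeakPartialsOn f g₁ g₂ D ∧
    ∀ᵐ z ∂(volume.restrict D),
      (g₁ z + Complex.I * g₂ z) / 2 = μ z * ((g₁ z - Complex.I * g₂ z) / 2)

/-- `f` is a quasiconformal mapping of `ℂ` onto itself: a homeomorphism of the plane
with locally square-integrable first generalized derivatives satisfying a nondegenerate
Beltrami equation a.e. -/
def IsQCOfPlane (f : ℂ → ℂ) : Prop :=
  (∃ F : ℂ ≃ₜ ℂ, ⇑F = f) ∧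
  ∃ g₁ g₂ : ℂ → ℂ, HasWeakPartialsOn f g₁ g₂ Set.univ ∧
    (∀ K : Set ℂ, IsCompact K →
      MeasureTheory.IntegrableOn (fun z => ‖g₁ z‖ ^ 2) K volume ∧
      MeasureTheory.IntegrableOn (fun z => ‖g₂ z‖ ^ 2) K volume) ∧
    ∃ μ : ℂ → ℂ, Measurable μ ∧ (∃ k : ℝ, k < 1 ∧ ∀ᵐ z ∂volume, ‖μ z‖ ≤ k) ∧
      ∀ᵐ z ∂volume,
        (g₁ z + Complex.I * g₂ z) / 2 = μ z * ((g₁ z - Complex.I * g₂ z) / 2)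

/-- The gradient of `u : ℂ → ℝ` as a vector in `ℝ²`. -/
noncomputable def gradVec (u : ℂ → ℝ) (z : ℂ) : Fin 2 → ℝ :=
  ![fderiv ℝ u z 1, fderiv ℝ u z Complex.I]

/-- `g` is the weak (generalized) gradient of `u` on `D`. -/
def HasWeakGradOn (u : ℂ → ℝ) (g : ℂ → Fin 2 → ℝ) (D : Set ℂ) : Prop :=
  MeasureTheory.LocallyIntegrableOn u D volume ∧
  MeasureTheory.LocallyIntegrableOn g D volume ∧
  ∀ φ : ℂ → ℝ, ContDiff ℝ (⊤ : ℕ∞) φ → HasCompactSupport φ → tsupport φ ⊆ D →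
    (∫ z in D, u z * fderiv ℝ φ z 1) = -(∫ z in D, g z 0 * φ z) ∧
    (∫ z in D, u z * fderiv ℝ φ z Complex.I) = -(∫ z in D, g z 1 * φ z)

/-- The class `𝓑` of symmetric, measurable, essentially bounded, uniformly elliptic
matrix functions with determinant identically `1` on `D`. -/
def InClassB (A : ℂ → Matrix (Fin 2) (Fin 2) ℝ) (D : Set ℂ) : Prop :=
  (∀ i j, Measurable fun z => A z i j) ∧
  (∀ z ∈ D, (A z).IsSymm) ∧
  (∀ z ∈ D, (A z).det = 1) ∧
  (∃ M : ℝ, ∀ᵐ z ∂(volume.restrict D), ∀ i j, |A z i j| ≤ M) ∧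
  (∃ ε : ℝ, 0 < ε ∧ ∀ z ∈ D, ∀ η : Fin 2 → ℝ,
    ε * (η 0 ^ 2 + η 1 ^ 2) ≤ ∑ i, (A z).mulVec η i * η i)

/-- `u` is `A`-harmonic on `D` (continuous weak solution of `div(A ∇u) = 0`). -/
def IsAHarmonicOn (A : ℂ → Matrix (Fin 2) (Fin 2) ℝ) (u : ℂ → ℝ) (D : Set ℂ) : Prop :=
  ContinuousOn u D ∧ ∃ g : ℂ → Fin 2 → ℝ, HasWeakGradOn u g D ∧
    ∀ φ : ℂ → ℝ, ContDiff ℝ (⊤ : ℕ∞) φ → HasCompactSupport φ → tsupport φ ⊆ D →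
      (∫ z in D, ∑ i, (A z).mulVec (g z) i * gradVec φ z i) = 0

/-- `u` of class `C¹` is `A`-harmonic on `D`. -/
def IsAHarmonicC1On (A : ℂ → Matrix (Fin 2) (Fin 2) ℝ) (u : ℂ → ℝ) (D : Set ℂ) : Prop :=
  ContDiffOn ℝ 1 u D ∧
    ∀ φ : ℂ → ℝ, ContDiff ℝ (⊤ : ℕ∞) φ → HasCompactSupport φ → tsupport φ ⊆ D →
      (∫ z in D, ∑ i, (A z).mulVec (gradVec u z) i * gradVec φ z i) = 0

/-- `u` is of class `C^{1+α}` on `D`: continuously differentiable with locally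
`α`-Hölder continuous partial derivatives. -/
def IsC1HolderOn (u : ℂ → ℝ) (α : ℝ≥0) (D : Set ℂ) : Prop :=
  ContDiffOn ℝ 1 u D ∧ ∀ z ∈ D, ∃ r > (0 : ℝ), ∃ C : ℝ≥0,
    HolderOnWith C α (fun w => gradVec u w) (D ∩ Metric.ball z r)

/-- The entries of the matrix function `A` are locally `α`-Hölder continuous on `D`. -/
def EntriesLocHolderOn (A : ℂ → Matrix (Fin 2) (Fin 2) ℝ) (α : ℝ≥0) (D : Set ℂ) : Prop :=
  ∀ z ∈ D, ∃ r > (0 : ℝ), ∃ C : ℝ≥0, ∀ i j,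
    HolderOnWith C α (fun w => A w i j) (D ∩ Metric.ball z r)

/-- `n` is the interior unit normal to `∂D` at `ζ`: a unit vector orthogonal to a
tangent direction of `∂D` at `ζ` and pointing into `D`. -/
def IsInteriorNormalAt (D : Set ℂ) (ζ n : ℂ) : Prop :=
  ‖n‖ = 1 ∧
  (∃ e : ℂ, HasTangentVia (frontier D) ζ e ∧ (n * (starRingEnd ℂ) e).re = 0) ∧
  ∃ ε > (0 : ℝ), ∀ t : ℝ, 0 < t → t < ε → ζ + t • n ∈ D

end


lemma qd_transl {g : ℂ → ℂ} (hg : MemLp g 2 volume) {ε : ℝ≥0∞} (hε : 0 < ε) :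
    ∃ δ > 0, ∀ t : ℂ, ‖t‖ < δ → ∫⁻ x, ‖g (x - t) - g x‖ₑ ^ 2 ≤ ε := by
  have : Fact ((1 : ℝ≥0∞) ≤ 2) := ⟨by norm_num⟩
  have : Fact ((2 : ℝ≥0∞) ≠ ∞) := ⟨by norm_num⟩
  set G := MemLp.toLp g hg with hG
  have hcont : Continuous (fun t : ℂ => DomAddAct.mk (-t) +ᵥ G) := by
    have : Continuous (fun t : ℂ => (DomAddAct.mk (-t) : ℂᵈᵃᵃ)) := by
      exact DomAddAct.continuous_mk.comp continuous_neg
    exact this.vadd continuous_const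
  have h0 : Tendsto (fun t : ℂ => edist (DomAddAct.mk (-t) +ᵥ G) G ^ 2) (𝓝 0) (𝓝 0) := by
    have h1 : Continuous (fun t : ℂ => edist (DomAddAct.mk (-t) +ᵥ G) G ^ 2) :=
      (ENNReal.continuous_pow 2).comp (hcont.edist continuous_const)
    have := h1.tendsto 0
    simpa using this
  have h2 := h0.eventually (gt_mem_nhds hε)
  obtain ⟨δ, hδ, h3⟩ := Metric.eventually_nhds_iff.1 h2
  refine ⟨δ, hδ, fun t ht => ?_⟩
  have h4 := (h3 (y := t) (by simpa using ht)).le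
  refine le_trans (le_of_eq ?_) h4
  rw [hG, DomAddAct.mk_vadd_toLp, Lp.edist_toLp_toLp, ← ENNReal.rpow_two,
    eLpNorm_eq_lintegral_rpow_enorm_toReal (by norm_num) (by norm_num), ← ENNReal.rpow_mul]
  simp [sub_eq_neg_add]

lemma qd_jensen {P : Measure ℂ} [IsProbabilityMeasure P] {h : ℂ → ℂ}
    (hh : AEStronglyMeasurable h P) : (∫⁻ t, ‖h t‖ₑ ∂P) ^ 2 ≤ ∫⁻ t, ‖h t‖ₑ ^ 2 ∂P := by
  have h1 := eLpNorm_le_eLpNorm_of_exponent_le (p := 1) (q := 2) (by norm_num) hh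
  rw [eLpNorm_one_eq_lintegral_enorm] at h1
  have h2 : eLpNorm h 2 P ^ 2 = ∫⁻ t, ‖h t‖ₑ ^ 2 ∂P := by
    rw [← ENNReal.rpow_two,
      eLpNorm_eq_lintegral_rpow_enorm_toReal (by norm_num) (by norm_num), ← ENNReal.rpow_mul]
    simp
  rw [← h2]
  gcongr

lemma qd_moll {g : ℂ → ℂ} (hg : MemLp g 2 volume) {ε : ℝ≥0∞} (hε : 0 < ε) :
    ∃ δ > 0, ∀ φ : ContDiffBump (0 : ℂ), φ.rOut < δ →
      ∫⁻ x, ‖(∫ t, φ.normed volume t • g (x - t)) - g x‖ₑ ^ 2 ≤ ε := by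
  obtain ⟨δ, hδ, h⟩ := qd_transl hg hε
  refine ⟨δ, hδ, fun φ hφ => ?_⟩
  set ψ := φ.normed volume with hψ
  have hψc : Continuous ψ := φ.continuous_normed
  have hψ0 : ∀ t, 0 ≤ ψ t := fun t => φ.nonneg_normed t
  have hψi : Integrable ψ := φ.integrable_normed
  set w : ℂ → ℝ≥0∞ := fun t => ENNReal.ofReal (ψ t) with hw
  have hwm : Measurable w := hψc.measurable.ennreal_ofReal
  have hw1 : ∫⁻ t, w t = 1 := by
    rw [hw, ← ofReal_integral_eq_lintegral_ofReal hψi (ae_of_all _ hψ0), hψ,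
      φ.integral_normed]; simp
  have hgl : LocallyIntegrable g := hg.locallyIntegrable (by norm_num)
  set P := (volume : Measure ℂ).withDensity w with hP
  have : IsProbabilityMeasure P := ⟨by rw [hP, withDensity_apply _ MeasurableSet.univ]; simpa⟩
  have hgm := hg.aestronglyMeasurable
  have hPv : P ≪ volume := withDensity_absolutelyContinuous _ _
  have hqx : ∀ x : ℂ, AEStronglyMeasurable (fun t => g (x - t) - g x) volume := fun x =>
    (hgm.comp_quasiMeasurePreserving
      (quasiMeasurePreserving_sub_left volume x)).sub aestronglyMeasurable_const
  have key : ∀ x, ‖(∫ t, ψ t • g (x - t)) - g x‖ₑ ^ 2 ≤ ∫⁻ t, w t * ‖g (x - t) - g x‖ₑ ^ 2 := by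
    intro x
    have hi : Integrable (fun t => ψ t • g (x - t)) := by
      have := (φ.hasCompactSupport_normed (μ := volume)).convolutionExists_left
        (ContinuousLinearMap.lsmul ℝ ℝ) hψc hgl x
      exact this
    have e1 : (∫ t, ψ t • g (x - t)) - g x = ∫ t, ψ t • (g (x - t) - g x) := by
      simp_rw [smul_sub]
      rw [integral_sub hi (hψi.smul_const _), integral_smul_const, hψ, φ.integral_normed, one_smul]
    have e2 : ‖(∫ t, ψ t • g (x - t)) - g x‖ₑ ≤ ∫⁻ t, ‖g (x - t) - g x‖ₑ ∂P := by
      rw [e1, hP, lintegral_withDensity_eq_lintegral_mul₀ hwm.aemeasurable (hqx x).enorm]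
      refine (enorm_integral_le_lintegral_enorm _).trans (le_of_eq ?_)
      refine lintegral_congr fun t => ?_
      simp only [enorm_smul, Pi.mul_apply, hw, Real.enorm_of_nonneg (hψ0 t)]
    calc _ ≤ (∫⁻ t, ‖g (x - t) - g x‖ₑ ∂P) ^ 2 := by gcongr
      _ ≤ ∫⁻ t, ‖g (x - t) - g x‖ₑ ^ 2 ∂P := qd_jensen ((hqx x).mono_ac hPv)
      _ = _ := by
        rw [hP, lintegral_withDensity_eq_lintegral_mul₀ hwm.aemeasurable ((hqx x).enorm.pow_const 2)]
        rfl
  calc _ ≤ ∫⁻ x, ∫⁻ t, w t * ‖g (x - t) - g x‖ₑ ^ 2 := lintegral_mono key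
    _ = ∫⁻ t, ∫⁻ x, w t * ‖g (x - t) - g x‖ₑ ^ 2 := by
      apply lintegral_lintegral_swap
      have h1 : AEStronglyMeasurable (fun p : ℂ × ℂ => g (p.1 - p.2)) (volume.prod volume) :=
        hgm.comp_quasiMeasurePreserving (quasiMeasurePreserving_sub_of_right_invariant volume volume)
      have h2 : AEStronglyMeasurable (fun p : ℂ × ℂ => g p.1) (volume.prod volume) :=
        hgm.comp_fst
      exact (hwm.comp measurable_snd).aemeasurable.mul ((h1.sub h2).enorm.pow_const 2)
    _ ≤ ∫⁻ t, w t * ε := by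
      refine lintegral_mono fun t => ?_
      by_cases ht : ‖t‖ < δ
      · rw [lintegral_const_mul' _ _ (by simp [hw])]
        gcongr
        exact h t ht
      · have : ψ t = 0 := by
          by_contra h0
          have : t ∈ Function.support ψ := h0
          rw [hψ, φ.support_normed_eq] at this
          simp at this
          exact ht (this.trans hφ)
        simp [hw, this]
    _ = ε := by rw [lintegral_mul_const _ hwm, hw1, one_mul]
lemma qd_conv_deriv {f g : ℂ → ℂ} (hf : Continuous f) {v : ℂ}
    (hw : ∀ φ : ℂ → ℝ, ContDiff ℝ (⊤ : ℕ∞) φ → HasCompactSupport φ →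
      (∫ z, f z * (fderiv ℝ φ z v : ℂ)) = -(∫ z, g z * (φ z : ℂ)))
    {ψ : ℂ → ℝ} (hψ : ContDiff ℝ (⊤ : ℕ∞) ψ) (hψc : HasCompactSupport ψ) (x : ℂ) :
    fderiv ℝ (convolution ψ f (ContinuousLinearMap.lsmul ℝ ℝ) volume) x v
      = ∫ t, ψ t • g (x - t) := by
  have hfl : LocallyIntegrable f := hf.locallyIntegrable
  have h1 := (hψc.hasFDerivAt_convolution_left (μ := volume) (ContinuousLinearMap.lsmul ℝ ℝ)
    (hψ.of_le (by exact_mod_cast le_top)) hfl x).fderiv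
  have hi := (hψc.fderiv ℝ).convolutionExists_left (μ := volume)
    (ContinuousLinearMap.precompL ℂ (ContinuousLinearMap.lsmul ℝ ℝ : ℝ →L[ℝ] ℂ →L[ℝ] ℂ))
    (hψ.continuous_fderiv (by simp)) hfl x
  have h1' : fderiv ℝ (convolution ψ f (ContinuousLinearMap.lsmul ℝ ℝ) volume) x v
      = ∫ t, (ContinuousLinearMap.lsmul ℝ ℝ) (fderiv ℝ ψ t v) (f (x - t)) := by
    rw [h1, convolution_def, ContinuousLinearMap.integral_apply hi]
    rfl
  rw [h1']
  have h2 := hw (fun t => ψ (x - t)) (hψ.comp (contDiff_const.sub contDiff_id))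
    (hψc.comp_homeomorph (Homeomorph.subLeft x))
  have h3 : ∀ t, fderiv ℝ (fun t => ψ (x - t)) t v = - fderiv ℝ ψ (x - t) v := by
    intro t
    have hd : HasFDerivAt (fun t : ℂ => x - t) (-(ContinuousLinearMap.id ℝ ℂ)) t := by
      simpa using (hasFDerivAt_id t).const_sub x
    have := ((hψ.differentiable (by simp)) (x - t)).hasFDerivAt.comp t hd
    have h4 := this.fderiv
    simp only [Function.comp_def] at h4
    rw [h4]; simp
  have e1 : (∫ t, ψ t • g (x - t)) = ∫ t, g t * (ψ (x - t) : ℂ) := by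
    rw [← integral_sub_left_eq_self _ volume x]
    simp [mul_comm]
  have e2 : (∫ t, (ContinuousLinearMap.lsmul ℝ ℝ) (fderiv ℝ ψ t v) (f (x - t)))
      = ∫ t, f t * (fderiv ℝ ψ (x - t) v : ℂ) := by
    rw [← integral_sub_left_eq_self _ volume x]
    simp [mul_comm]
  rw [e1, e2]
  simp only [h3] at h2
  push_cast at h2
  simp only [mul_neg, integral_neg, neg_inj] at h2
  exact h2

lemma qd_memLp_ind {g : ℂ → ℂ} (hg : LocallyIntegrable g)
    (h2 : ∀ K : Set ℂ, IsCompact K → IntegrableOn (fun z => ‖g z‖ ^ 2) K volume) (ρ : ℝ) :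
    MemLp ((closedBall (0 : ℂ) ρ).indicator g) 2 volume := by
  rw [memLp_indicator_iff_restrict isClosed_closedBall.measurableSet]
  exact (memLp_two_iff_integrable_sq_norm hg.aestronglyMeasurable.restrict).2
    (h2 _ (isCompact_closedBall 0 ρ))

lemma qd_moll_loc {g : ℂ → ℂ} (hg : LocallyIntegrable g)
    (h2 : ∀ K : Set ℂ, IsCompact K → IntegrableOn (fun z => ‖g z‖ ^ 2) K volume) (ρ : ℝ)
    {ε : ℝ≥0∞} (hε : 0 < ε) :
    ∃ δ > 0, ∀ φ : ContDiffBump (0 : ℂ), φ.rOut < δ →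
      ∫⁻ x in closedBall (0 : ℂ) ρ, ‖(∫ t, φ.normed volume t • g (x - t)) - g x‖ₑ ^ 2 ≤ ε := by
  obtain ⟨δ, hδ, h⟩ := qd_moll (qd_memLp_ind hg h2 (ρ + 1)) hε
  refine ⟨min δ 1, by positivity, fun φ hφ => ?_⟩
  refine le_trans ?_ (h φ (hφ.trans_le (min_le_left _ _)))
  refine le_trans (le_of_eq ?_) (setLIntegral_le_lintegral (closedBall (0 : ℂ) ρ) _)
  refine setLIntegral_congr_fun isClosed_closedBall.measurableSet fun x hx => ?_
  rw [mem_closedBall_zero_iff] at hx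
  have e1 : (closedBall (0 : ℂ) (ρ + 1)).indicator g x = g x :=
    indicator_of_mem (by rw [mem_closedBall_zero_iff]; linarith) _
  have e2 : ∀ t, φ.normed volume t • g (x - t)
      = φ.normed volume t • (closedBall (0 : ℂ) (ρ + 1)).indicator g (x - t) := by
    intro t
    by_cases ht : t ∈ Function.support (φ.normed volume)
    · rw [φ.support_normed_eq, mem_ball_zero_iff] at ht
      rw [indicator_of_mem]
      rw [mem_closedBall_zero_iff]
      have := norm_sub_le x t
      have := hφ.trans_le (min_le_right _ _)
      linarith
    · rw [Function.notMem_support.1 ht]; simp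
  simp only [e1, e2]

/-- approximation by smooth maps -/
lemma qd_approx {f g₁ g₂ : ℂ → ℂ} (hf : Continuous f) (hg₁ : LocallyIntegrable g₁)
    (hg₂ : LocallyIntegrable g₂)
    (hs₁ : ∀ K : Set ℂ, IsCompact K → IntegrableOn (fun z => ‖g₁ z‖ ^ 2) K volume)
    (hs₂ : ∀ K : Set ℂ, IsCompact K → IntegrableOn (fun z => ‖g₂ z‖ ^ 2) K volume)
    (hw₁ : ∀ φ : ℂ → ℝ, ContDiff ℝ (⊤ : ℕ∞) φ → HasCompactSupport φ →
      (∫ z, f z * (fderiv ℝ φ z 1 : ℂ)) = -(∫ z, g₁ z * (φ z : ℂ)))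
    (hw₂ : ∀ φ : ℂ → ℝ, ContDiff ℝ (⊤ : ℕ∞) φ → HasCompactSupport φ →
      (∫ z, f z * (fderiv ℝ φ z I : ℂ)) = -(∫ z, g₂ z * (φ z : ℂ)))
    (ρ : ℝ) {ε : ℝ} (hε : 0 < ε) :
    ∃ F : ℂ → ℂ, ContDiff ℝ (⊤ : ℕ∞) F ∧ (∀ z ∈ closedBall (0 : ℂ) ρ, dist (F z) (f z) ≤ ε) ∧
      (∫⁻ x in closedBall (0 : ℂ) ρ, ‖fderiv ℝ F x 1 - g₁ x‖ₑ ^ 2 ≤ ENNReal.ofReal ε) ∧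
      (∫⁻ x in closedBall (0 : ℂ) ρ, ‖fderiv ℝ F x I - g₂ x‖ₑ ^ 2 ≤ ENNReal.ofReal ε) := by
  have hε' : 0 < ENNReal.ofReal ε := by simpa
  obtain ⟨δ₁, hδ₁, h₁⟩ := qd_moll_loc hg₁ hs₁ ρ hε'
  obtain ⟨δ₂, hδ₂, h₂⟩ := qd_moll_loc hg₂ hs₂ ρ hε'
  have huc := (isCompact_closedBall (0 : ℂ) (ρ + 1)).uniformContinuousOn_of_continuous hf.continuousOn
  obtain ⟨δ₃, hδ₃, h₃⟩ := Metric.uniformContinuousOn_iff_le.1 huc ε hε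
  set δ := min (min δ₁ δ₂) (min δ₃ 1) with hδ
  have hδ0 : 0 < δ := by positivity
  let φ : ContDiffBump (0 : ℂ) := ⟨δ / 4, δ / 2, by positivity, by linarith⟩
  have hr : φ.rOut < δ := by change δ / 2 < δ; linarith
  have hψ : ContDiff ℝ (⊤ : ℕ∞) (φ.normed volume) := φ.contDiff_normed
  have hψc : HasCompactSupport (φ.normed volume) := φ.hasCompactSupport_normed
  refine ⟨convolution (φ.normed volume) f (ContinuousLinearMap.lsmul ℝ ℝ) volume,
    hψc.contDiff_convolution_left _ hψ hf.locallyIntegrable, ?_, ?_, ?_⟩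
  · intro z hz
    rw [mem_closedBall_zero_iff] at hz
    apply φ.dist_normed_convolution_le hf.aestronglyMeasurable
    intro x hx
    have hx' : dist x z < δ := (mem_ball.1 hx).trans hr
    have a1 : δ ≤ 1 := (min_le_right _ _).trans (min_le_right _ _)
    have a2 : δ ≤ δ₃ := (min_le_right _ _).trans (min_le_left _ _)
    apply h₃
    · rw [mem_closedBall_zero_iff]
      rw [dist_eq_norm] at hx'
      have := norm_le_norm_add_norm_sub z x
      rw [norm_sub_rev] at this
      linarith
    · rw [mem_closedBall_zero_iff]; linarith
    · linarith
  · simp_rw [qd_conv_deriv hf hw₁ hψ hψc]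
    exact h₁ φ (hr.trans_le ((min_le_left _ _).trans (min_le_left _ _)))
  · simp_rw [qd_conv_deriv hf hw₂ hψ hψc]
    exact h₂ φ (hr.trans_le ((min_le_left _ _).trans (min_le_right _ _)))
def qdW (a b : ℂ) : ℝ := a.re * b.im - a.im * b.re

lemma qdW_abs (a b : ℂ) : |qdW a b| ≤ ‖a‖ * ‖b‖ := by
  have h : qdW a b = (starRingEnd ℂ a * b).im := by simp [qdW]; ring
  rw [h]
  refine (Complex.abs_im_le_norm _).trans (by simp)

lemma qdW_continuous : Continuous (fun p : ℂ × ℂ => qdW p.1 p.2) := by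
  unfold qdW; fun_prop

/-- `qdW e ·` as a continuous linear map -/
noncomputable def qdWL (e : ℂ) : ℂ →L[ℝ] ℝ := e.re • Complex.imCLM - e.im • Complex.reCLM

lemma qdWL_apply (e b : ℂ) : qdWL e b = qdW e b := by simp [qdWL, qdW]

lemma qdW_id (α : ℂ →L[ℝ] ℝ) (e p q : ℂ) :
    α e * qdW p q = α p * qdW e q - α q * qdW e p := by
  have h : ∀ z : ℂ, α z = z.re * α 1 + z.im * α I := by
    intro z
    conv_lhs => rw [← Complex.re_add_im z]
    have h1 : ((z.re : ℂ) + z.im * I) = z.re • (1 : ℂ) + z.im • I := by simp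
    rw [h1, map_add, map_smul, map_smul, smul_eq_mul, smul_eq_mul]
  rw [h e, h p, h q]; simp only [qdW]; ring

lemma qd_ibp {H v : ℂ → ℝ} (hH : ContDiff ℝ (⊤ : ℕ∞) H) (hHc : HasCompactSupport H)
    (hv : ContDiff ℝ (⊤ : ℕ∞) v) (a b : ℂ) :
    ∫ z, fderiv ℝ H z a * fderiv ℝ v z b = -∫ z, H z * fderiv ℝ (fderiv ℝ v) z a b := by
  have hv' : ContDiff ℝ (⊤ : ℕ∞) (fderiv ℝ v) := hv.fderiv_right (by simp)
  have hd : ∀ z, fderiv ℝ (fun z => fderiv ℝ v z b) z a = fderiv ℝ (fderiv ℝ v) z a b := by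
    intro z
    have h1 : DifferentiableAt ℝ (fderiv ℝ v) z := (hv'.differentiable (by simp)) z
    have := (h1.hasFDerivAt.clm_apply (hasFDerivAt_const b z)).fderiv
    rw [this]; simp
  have hHd : Continuous (fun z => fderiv ℝ H z a) :=
    (hH.continuous_fderiv (by simp)).clm_apply continuous_const
  have hvd : Continuous (fun z => fderiv ℝ v z b) :=
    (hv.continuous_fderiv (by simp)).clm_apply continuous_const
  have hvdd : Continuous (fun z => fderiv ℝ (fderiv ℝ v) z a b) :=
    ((hv'.continuous_fderiv (by simp)).clm_apply continuous_const).clm_apply continuous_const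
  have hvb : ContDiff ℝ (⊤ : ℕ∞) (fun z => fderiv ℝ v z b) := hv'.clm_apply contDiff_const
  have := integral_mul_fderiv_eq_neg_fderiv_mul_of_integrable (μ := (volume : Measure ℂ))
    (f := H) (g := fun z => fderiv ℝ v z b) (v := a) ?_ ?_ ?_ ?_ ?_
  · simp only [hd] at this
    rw [this]; simp
  · refine (hHd.mul hvd).integrable_of_hasCompactSupport ?_
    exact (hHc.fderiv_apply (𝕜 := ℝ) a).mul_right
  · simp only [hd]
    exact (hH.continuous.mul hvdd).integrable_of_hasCompactSupport hHc.mul_right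
  · exact (hH.continuous.mul hvd).integrable_of_hasCompactSupport hHc.mul_right
  · exact fun z _ => (hH.differentiable (by simp)) z
  · exact fun z _ => (hvb.differentiable (by simp)) z

lemma qd_null {H v : ℂ → ℝ} (hH : ContDiff ℝ (⊤ : ℕ∞) H) (hHc : HasCompactSupport H)
    (hv : ContDiff ℝ (⊤ : ℕ∞) v) :
    ∫ z, (fderiv ℝ H z 1 * fderiv ℝ v z I - fderiv ℝ H z I * fderiv ℝ v z 1) = 0 := by
  have hint : ∀ a b : ℂ, Integrable (fun z => fderiv ℝ H z a * fderiv ℝ v z b) := by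
    intro a b
    refine Continuous.integrable_of_hasCompactSupport ?_ ?_
    · exact ((hH.continuous_fderiv (by simp)).clm_apply continuous_const).mul
        ((hv.continuous_fderiv (by simp)).clm_apply continuous_const)
    · exact (hHc.fderiv_apply (𝕜 := ℝ) a).mul_right
  rw [integral_sub (hint _ _) (hint _ _), qd_ibp hH hHc hv, qd_ibp hH hHc hv, sub_eq_zero]
  congr 1
  refine integral_congr_ae (ae_of_all _ fun z => ?_)
  have : IsSymmSndFDerivAt ℝ v z := hv.contDiffAt.isSymmSndFDerivAt (by
    rw [minSmoothness_of_isRCLikeNormedField]; exact WithTop.coe_le_coe.2 (le_top : (2 : ℕ∞) ≤ ⊤))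
  simp only [this.eq 1 I]

lemma qd_smooth_zero {F : ℂ → ℂ} {h φ : ℂ → ℝ} (hF : ContDiff ℝ (⊤ : ℕ∞) F)
    (hh : ContDiff ℝ (⊤ : ℕ∞) h) (hφ : ContDiff ℝ (⊤ : ℕ∞) φ) (hφc : HasCompactSupport φ)
    (h0 : ∀ z, h (F z) ≠ 0 → fderiv ℝ φ z = 0) (e : ℂ) :
    ∫ z, φ z * fderiv ℝ h (F z) e * qdW (fderiv ℝ F z 1) (fderiv ℝ F z I) = 0 := by
  have hhF : ContDiff ℝ (⊤ : ℕ∞) (fun z => h (F z)) := hh.comp hF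
  have hH : ContDiff ℝ (⊤ : ℕ∞) (fun z => φ z * h (F z)) := hφ.mul hhF
  have hv : ContDiff ℝ (⊤ : ℕ∞) (fun z => qdWL e (F z)) := (qdWL e).contDiff.comp hF
  have := qd_null hH hφc.mul_right hv
  rw [← this]
  refine integral_congr_ae (ae_of_all _ fun z => ?_)
  have dF : DifferentiableAt ℝ F z := (hF.differentiable (by simp)) z
  have dh : DifferentiableAt ℝ h (F z) := (hh.differentiable (by simp)) (F z)
  have d1 : HasFDerivAt (fun z => h (F z)) ((fderiv ℝ h (F z)).comp (fderiv ℝ F z)) z :=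
    dh.hasFDerivAt.comp z dF.hasFDerivAt
  have dφ : HasFDerivAt φ (fderiv ℝ φ z) z := ((hφ.differentiable (by simp)) z).hasFDerivAt
  have d2 : ∀ u, fderiv ℝ (fun z => φ z * h (F z)) z u
      = φ z * fderiv ℝ h (F z) (fderiv ℝ F z u) := by
    intro u
    have d4 : HasFDerivAt (fun z => φ z * h (F z)) _ z := dφ.mul d1
    rw [d4.fderiv]
    by_cases hz : h (F z) = 0
    · simp [hz]
    · simp [h0 z hz]
  have d3 : ∀ u, fderiv ℝ (fun z => qdWL e (F z)) z u = qdW e (fderiv ℝ F z u) := by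
    intro u
    have := ((qdWL e).hasFDerivAt.comp z dF.hasFDerivAt).fderiv
    simp only [Function.comp_def] at this
    rw [this]; simp [qdWL_apply]
  simp only [d2, d3]
  have := qdW_id (fderiv ℝ h (F z)) e (fderiv ℝ F z 1) (fderiv ℝ F z I)
  linear_combination (φ z) * this
/-- Basic analytic data for a map with weak derivatives. -/
structure QdData (f g₁ g₂ : ℂ → ℂ) : Prop where
  hf : Continuous f
  hg₁ : LocallyIntegrable g₁
  hg₂ : LocallyIntegrable g₂
  hs₁ : ∀ K : Set ℂ, IsCompact K → IntegrableOn (fun z => ‖g₁ z‖ ^ 2) K volume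
  hs₂ : ∀ K : Set ℂ, IsCompact K → IntegrableOn (fun z => ‖g₂ z‖ ^ 2) K volume
  hw₁ : ∀ φ : ℂ → ℝ, ContDiff ℝ (⊤ : ℕ∞) φ → HasCompactSupport φ →
      (∫ z, f z * (fderiv ℝ φ z 1 : ℂ)) = -(∫ z, g₁ z * (φ z : ℂ))
  hw₂ : ∀ φ : ℂ → ℝ, ContDiff ℝ (⊤ : ℕ∞) φ → HasCompactSupport φ →
      (∫ z, f z * (fderiv ℝ φ z I : ℂ)) = -(∫ z, g₂ z * (φ z : ℂ))

lemma qd_cs {μ : Measure ℂ} {a b : ℂ → ℂ} (ha : AEStronglyMeasurable a μ)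
    (hb : AEStronglyMeasurable b μ) :
    ∫⁻ z, ‖a z‖ₑ * ‖b z‖ₑ ∂μ
      ≤ (∫⁻ z, ‖a z‖ₑ ^ 2 ∂μ) ^ (1 / 2 : ℝ) * (∫⁻ z, ‖b z‖ₑ ^ 2 ∂μ) ^ (1 / 2 : ℝ) := by
  have := ENNReal.lintegral_mul_le_Lp_mul_Lq μ Real.HolderConjugate.two_two ha.enorm hb.enorm
  simpa using this

lemma qdW_enorm (a b : ℂ) : ‖qdW a b‖ₑ ≤ ‖a‖ₑ * ‖b‖ₑ := by
  rw [← enorm_mul]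
  rw [enorm_le_iff_norm_le, norm_mul]
  exact qdW_abs a b

lemma qd_sq_lt_top {f g₁ g₂ : ℂ → ℂ} (h : QdData f g₁ g₂) (ρ : ℝ) :
    (∫⁻ z in closedBall (0 : ℂ) ρ, ‖g₁ z‖ₑ ^ 2 < ∞) ∧
    (∫⁻ z in closedBall (0 : ℂ) ρ, ‖g₂ z‖ₑ ^ 2 < ∞) := by
  have h1 := (h.hs₁ _ (isCompact_closedBall (0 : ℂ) ρ)).hasFiniteIntegral
  have h2 := (h.hs₂ _ (isCompact_closedBall (0 : ℂ) ρ)).hasFiniteIntegral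
  simp only [hasFiniteIntegral_iff_enorm, enorm_pow, enorm_norm] at h1 h2
  exact ⟨h1, h2⟩

lemma qd_J_aesm {f g₁ g₂ : ℂ → ℂ} (h : QdData f g₁ g₂) :
    AEStronglyMeasurable (fun z => qdW (g₁ z) (g₂ z)) volume :=
  qdW_continuous.comp_aestronglyMeasurable
    (h.hg₁.aestronglyMeasurable.prodMk h.hg₂.aestronglyMeasurable)

lemma qd_J_lt_top {f g₁ g₂ : ℂ → ℂ} (h : QdData f g₁ g₂) (ρ : ℝ) :
    ∫⁻ z in closedBall (0 : ℂ) ρ, ‖qdW (g₁ z) (g₂ z)‖ₑ < ∞ := by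
  obtain ⟨h1, h2⟩ := qd_sq_lt_top h ρ
  refine lt_of_le_of_lt ((lintegral_mono fun z => qdW_enorm (g₁ z) (g₂ z)).trans
    (qd_cs h.hg₁.aestronglyMeasurable.restrict h.hg₂.aestronglyMeasurable.restrict)) ?_
  exact ENNReal.mul_lt_top (ENNReal.rpow_lt_top_of_nonneg (by norm_num) h1.ne)
    (ENNReal.rpow_lt_top_of_nonneg (by norm_num) h2.ne)

lemma qd_seq {f g₁ g₂ : ℂ → ℂ} (h : QdData f g₁ g₂) (ρ : ℝ) :
    ∃ F : ℕ → ℂ → ℂ, (∀ n, ContDiff ℝ (⊤ : ℕ∞) (F n)) ∧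
      TendstoUniformlyOn F f atTop (closedBall (0 : ℂ) ρ) ∧
      Tendsto (fun n => ∫⁻ z in closedBall (0 : ℂ) ρ,
        ‖qdW (fderiv ℝ (F n) z 1) (fderiv ℝ (F n) z I) - qdW (g₁ z) (g₂ z)‖ₑ) atTop (𝓝 0) := by
  have hpos : ∀ n : ℕ, (0 : ℝ) < 1 / ((n : ℝ) + 1) := fun n => by positivity
  choose F hF1 hF2 hF3 hF4 using fun n : ℕ =>
    qd_approx h.hf h.hg₁ h.hg₂ h.hs₁ h.hs₂ h.hw₁ h.hw₂ ρ (hpos n)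
  refine ⟨F, hF1, ?_, ?_⟩
  · rw [Metric.tendstoUniformlyOn_iff]
    intro ε hε
    filter_upwards [tendsto_one_div_add_atTop_nhds_zero_nat.eventually (gt_mem_nhds hε)] with n hn z hz
    rw [dist_comm]
    exact (hF2 n z hz).trans_lt hn
  · set s : ℕ → ℝ≥0∞ := fun n => ENNReal.ofReal (1 / ((n : ℝ) + 1)) ^ (1 / 2 : ℝ) with hs
    obtain ⟨h1, h2⟩ := qd_sq_lt_top h ρ
    set N₁ := (∫⁻ z in closedBall (0 : ℂ) ρ, ‖g₁ z‖ₑ ^ 2) ^ (1 / 2 : ℝ) with hN₁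
    set N₂ := (∫⁻ z in closedBall (0 : ℂ) ρ, ‖g₂ z‖ₑ ^ 2) ^ (1 / 2 : ℝ) with hN₂
    have hN₁t : N₁ ≠ ∞ := (ENNReal.rpow_lt_top_of_nonneg (by norm_num) h1.ne).ne
    have hN₂t : N₂ ≠ ∞ := (ENNReal.rpow_lt_top_of_nonneg (by norm_num) h2.ne).ne
    have hst : Tendsto s atTop (𝓝 0) := by
      have h3 : Tendsto (fun n : ℕ => ENNReal.ofReal (1 / ((n : ℝ) + 1))) atTop (𝓝 0) := by
        simpa using ENNReal.tendsto_ofReal tendsto_one_div_add_atTop_nhds_zero_nat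
      have := h3.ennrpow_const (1 / 2)
      simpa [hs] using this
    have hlim : Tendsto (fun n => s n * N₂ + N₁ * s n + s n * s n) atTop (𝓝 0) := by
      have t1 := ENNReal.Tendsto.mul_const (b := N₂) hst (Or.inr hN₂t)
      have t2 := ENNReal.Tendsto.const_mul (a := N₁) hst (Or.inr hN₁t)
      have t3 := ENNReal.Tendsto.mul hst (Or.inr ENNReal.zero_ne_top) hst (Or.inr ENNReal.zero_ne_top)
      simpa using (t1.add t2).add t3
    refine tendsto_of_tendsto_of_tendsto_of_le_of_le tendsto_const_nhds hlim (fun n => zero_le) ?_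
    intro n
    have m1 : AEStronglyMeasurable (fun z => fderiv ℝ (F n) z 1)
        (volume.restrict (closedBall (0 : ℂ) ρ)) :=
      (((hF1 n).continuous_fderiv (by simp)).clm_apply continuous_const).aestronglyMeasurable
    have m2 : AEStronglyMeasurable (fun z => fderiv ℝ (F n) z I)
        (volume.restrict (closedBall (0 : ℂ) ρ)) :=
      (((hF1 n).continuous_fderiv (by simp)).clm_apply continuous_const).aestronglyMeasurable
    have m3 := h.hg₁.aestronglyMeasurable.restrict (s := closedBall (0 : ℂ) ρ)
    have m4 := h.hg₂.aestronglyMeasurable.restrict (s := closedBall (0 : ℂ) ρ)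
    have b1 : (∫⁻ z in closedBall (0 : ℂ) ρ, ‖fderiv ℝ (F n) z 1 - g₁ z‖ₑ ^ 2) ^ (1 / 2 : ℝ) ≤ s n :=
      ENNReal.rpow_le_rpow (hF3 n) (by norm_num)
    have b2 : (∫⁻ z in closedBall (0 : ℂ) ρ, ‖fderiv ℝ (F n) z I - g₂ z‖ₑ ^ 2) ^ (1 / 2 : ℝ) ≤ s n :=
      ENNReal.rpow_le_rpow (hF4 n) (by norm_num)
    calc _ ≤ ∫⁻ z in closedBall (0 : ℂ) ρ, (‖fderiv ℝ (F n) z 1 - g₁ z‖ₑ * ‖g₂ z‖ₑ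
          + ‖g₁ z‖ₑ * ‖fderiv ℝ (F n) z I - g₂ z‖ₑ
          + ‖fderiv ℝ (F n) z 1 - g₁ z‖ₑ * ‖fderiv ℝ (F n) z I - g₂ z‖ₑ) := by
          refine lintegral_mono fun z => ?_
          have : qdW (fderiv ℝ (F n) z 1) (fderiv ℝ (F n) z I) - qdW (g₁ z) (g₂ z)
            = qdW (fderiv ℝ (F n) z 1 - g₁ z) (g₂ z) + qdW (g₁ z) (fderiv ℝ (F n) z I - g₂ z)
              + qdW (fderiv ℝ (F n) z 1 - g₁ z) (fderiv ℝ (F n) z I - g₂ z) := by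
            simp only [qdW, Complex.sub_re, Complex.sub_im]; ring
          rw [this]
          refine (enorm_add_le _ _).trans (add_le_add ((enorm_add_le _ _).trans ?_) (qdW_enorm _ _))
          exact add_le_add (qdW_enorm _ _) (qdW_enorm _ _)
      _ = (∫⁻ z in closedBall (0 : ℂ) ρ, ‖fderiv ℝ (F n) z 1 - g₁ z‖ₑ * ‖g₂ z‖ₑ)
          + (∫⁻ z in closedBall (0 : ℂ) ρ, ‖g₁ z‖ₑ * ‖fderiv ℝ (F n) z I - g₂ z‖ₑ)
          + ∫⁻ z in closedBall (0 : ℂ) ρ,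
            ‖fderiv ℝ (F n) z 1 - g₁ z‖ₑ * ‖fderiv ℝ (F n) z I - g₂ z‖ₑ := by
          rw [lintegral_add_left', lintegral_add_left']
          · exact (m1.sub m3).enorm.mul m4.enorm
          · exact ((m1.sub m3).enorm.mul m4.enorm).add (m3.enorm.mul (m2.sub m4).enorm)
      _ ≤ _ := by
          refine add_le_add (add_le_add ?_ ?_) ?_
          · exact (qd_cs (m1.sub m3) m4).trans (mul_le_mul' b1 le_rfl)
          · exact (qd_cs m3 (m2.sub m4)).trans (mul_le_mul' le_rfl b2)
          · exact (qd_cs (m1.sub m3) (m2.sub m4)).trans (mul_le_mul' b1 b2)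
noncomputable def qdNu (g₁ g₂ : ℂ → ℂ) : Measure ℂ :=
  volume.withDensity (fun z => ENNReal.ofReal (qdW (g₁ z) (g₂ z)))

lemma qd_nu_finite {f g₁ g₂ : ℂ → ℂ} (h : QdData f g₁ g₂) :
    IsFiniteMeasureOnCompacts (qdNu g₁ g₂) := by
  refine ⟨fun K hK => ?_⟩
  obtain ⟨ρ, hρ⟩ := hK.isBounded.subset_closedBall (0 : ℂ)
  refine (measure_mono hρ).trans_lt ?_
  rw [qdNu, withDensity_apply _ isClosed_closedBall.measurableSet]
  refine lt_of_le_of_lt (lintegral_mono fun z => ?_) (qd_J_lt_top h ρ)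
  exact Real.ofReal_le_enorm _

lemma qd_nu_integral {f g₁ g₂ : ℂ → ℂ} (h : QdData f g₁ g₂)
    (hJ : ∀ᵐ z, 0 ≤ qdW (g₁ z) (g₂ z)) (u : ℂ → ℝ) :
    ∫ z, u z ∂(qdNu g₁ g₂) = ∫ z, u z * qdW (g₁ z) (g₂ z) := by
  rw [qdNu, integral_withDensity_eq_integral_toReal_smul₀
    (qd_J_aesm h).aemeasurable.ennreal_ofReal (ae_of_all _ fun z => by simp)]
  refine integral_congr_ae ?_
  filter_upwards [hJ] with z hz
  rw [ENNReal.toReal_ofReal hz, smul_eq_mul, mul_comm]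

lemma qd_zero (f : ℂ ≃ₜ ℂ) {g₁ g₂ : ℂ → ℂ} (hd : QdData f g₁ g₂) {h : ℂ → ℝ}
    (hh : ContDiff ℝ (⊤ : ℕ∞) h) (hc : HasCompactSupport h) (e : ℂ) :
    ∫ z, fderiv ℝ h (f z) e * qdW (g₁ z) (g₂ z) = 0 := by
  have hK : IsCompact (f ⁻¹' tsupport h) := f.isCompact_preimage.2 hc
  obtain ⟨ρ₀, hρ₀⟩ := hK.isBounded.subset_ball (0 : ℂ)
  set ρ := max ρ₀ 1 with hρdef
  have hρ1 : 0 < ρ := lt_of_lt_of_le one_pos (le_max_right _ _)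
  have hρ : f ⁻¹' tsupport h ⊆ ball (0 : ℂ) ρ := hρ₀.trans (ball_subset_ball (le_max_left _ _))
  let φb : ContDiffBump (0 : ℂ) := ⟨ρ, ρ + 1, hρ1, by linarith⟩
  let φ : ℂ → ℝ := φb
  have hφ : ContDiff ℝ (⊤ : ℕ∞) φ := φb.contDiff
  have hφc : HasCompactSupport φ := φb.hasCompactSupport
  have hφ1 : ∀ z ∈ closedBall (0 : ℂ) ρ, φ z = 1 := fun z hz => φb.one_of_mem_closedBall hz
  have hφ0 : ∀ z, z ∉ closedBall (0 : ℂ) (ρ + 1) → φ z = 0 := fun z hz =>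
    φb.zero_of_le_dist (by
      rw [mem_closedBall, not_le] at hz; exact hz.le)
  have hφle : ∀ z, |φ z| ≤ 1 := fun z => by
    rw [abs_of_nonneg φb.nonneg]; exact φb.le_one
  have hdφ : ∀ z, fderiv ℝ φ z ≠ 0 → z ∈ closedBall (0 : ℂ) (ρ + 1) \ ball 0 ρ := by
    intro z hz
    constructor
    · by_contra hz'
      apply hz
      have : φ =ᶠ[𝓝 z] fun _ => 0 := by
        filter_upwards [isClosed_closedBall.isOpen_compl.mem_nhds hz'] with y hy
        exact hφ0 y hy
      rw [this.fderiv_eq]; simp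
    · intro hz'
      apply hz
      have : φ =ᶠ[𝓝 z] fun _ => 1 := by
        filter_upwards [isOpen_ball.mem_nhds hz'] with y hy
        exact hφ1 y (ball_subset_closedBall hy)
      rw [this.fderiv_eq]; simp
  obtain ⟨F, hF1, hF2, hF3⟩ := qd_seq hd (ρ + 1)
  set B := closedBall (0 : ℂ) (ρ + 1) with hB
  -- the derivative of h
  set d : ℂ → ℝ := fun w => fderiv ℝ h w e with hddef
  have hdc : Continuous d := (hh.continuous_fderiv (by simp)).clm_apply continuous_const
  have hdcs : HasCompactSupport d := hc.fderiv_apply (𝕜 := ℝ) e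
  have hduc : UniformContinuous d := hdcs.uniformContinuous_of_continuous hdc
  obtain ⟨C, hC⟩ := hdcs.exists_bound_of_continuous hdc
  have hC0 : 0 ≤ C := (norm_nonneg _).trans (hC 0)
  have hd0 : ∀ z, z ∉ ball (0 : ℂ) ρ → d (f z) = 0 := by
    intro z hz
    have : f z ∉ tsupport h := fun h' => hz (hρ h')
    have h2 : fderiv ℝ h (f z) = 0 := by
      by_contra h3
      exact this (support_fderiv_subset ℝ h3)
    simp [hddef, h2]
  have hrepl : ∀ z, d (f z) * qdW (g₁ z) (g₂ z) = φ z * d (f z) * qdW (g₁ z) (g₂ z) := by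
    intro z
    by_cases hz : z ∈ ball (0 : ℂ) ρ
    · rw [hφ1 z (ball_subset_closedBall hz), one_mul]
    · rw [hd0 z hz]; ring
  change ∫ z, d (f z) * qdW (g₁ z) (g₂ z) = 0
  simp_rw [hrepl]
  -- approximants vanish
  have hann : IsCompact (f '' (B \ ball 0 ρ)) :=
    ((isCompact_closedBall _ _).diff isOpen_ball).image f.continuous
  have hdisj : Disjoint (f '' (B \ ball 0 ρ)) (tsupport h) := by
    rw [Set.disjoint_left]
    rintro _ ⟨z, hz, rfl⟩ hz'
    exact hz.2 (hρ hz')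
  obtain ⟨δ, hδ, hsep⟩ := hdisj.exists_thickenings hann (isClosed_tsupport h)
  have hvan : ∀ᶠ n in atTop, ∫ z, φ z * d (F n z) *
      qdW (fderiv ℝ (F n) z 1) (fderiv ℝ (F n) z I) = 0 := by
    filter_upwards [Metric.tendstoUniformlyOn_iff.1 hF2 δ hδ] with n hn
    apply qd_smooth_zero (hF1 n) hh hφ hφc
    intro z hz
    by_contra hne
    have hzA := hdφ z hne
    have h1 : F n z ∈ thickening δ (f '' (B \ ball 0 ρ)) := by
      rw [mem_thickening_iff]
      exact ⟨f z, mem_image_of_mem _ hzA, by rw [dist_comm]; exact hn z hzA.1⟩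
    have h2 : F n z ∈ thickening δ (tsupport h) :=
      self_subset_thickening hδ _ (subset_tsupport h hz)
    exact Set.disjoint_left.1 hsep h1 h2
  -- restrict to B
  have hres : ∀ u v : ℂ → ℝ, ∫ z, φ z * u z * v z = ∫ z in B, φ z * u z * v z := by
    intro u v
    rw [setIntegral_eq_integral_of_forall_compl_eq_zero]
    intro z hz
    rw [hφ0 z hz]; ring
  have hlim : Tendsto (fun n => ∫ z in B, φ z * d (F n z) *
      qdW (fderiv ℝ (F n) z 1) (fderiv ℝ (F n) z I)) atTop
      (𝓝 (∫ z in B, φ z * d (f z) * qdW (g₁ z) (g₂ z))) := by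
    have hJm := (qd_J_aesm hd).restrict (s := B)
    have hJi : IntegrableOn (fun z => qdW (g₁ z) (g₂ z)) B := ⟨hJm, qd_J_lt_top hd (ρ + 1)⟩
    refine tendsto_integral_of_L1 _ ?_ ?_ ?_
    · exact (hφ.continuous.mul (hdc.comp f.continuous)).aestronglyMeasurable.mul hJm
    · refine Eventually.of_forall fun n => ?_
      refine ContinuousOn.integrableOn_compact (isCompact_closedBall _ _) (Continuous.continuousOn ?_)
      exact (hφ.continuous.mul (hdc.comp (hF1 n).continuous)).mul
        (qdW_continuous.comp ((((hF1 n).continuous_fderiv (by simp)).clm_apply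
          continuous_const).prodMk (((hF1 n).continuous_fderiv (by simp)).clm_apply
          continuous_const)))
    · set E : ℕ → ℝ≥0∞ := fun n => ∫⁻ z in B,
        ‖qdW (fderiv ℝ (F n) z 1) (fderiv ℝ (F n) z I) - qdW (g₁ z) (g₂ z)‖ₑ with hE
      set NJ : ℝ≥0∞ := ∫⁻ z in B, ‖qdW (g₁ z) (g₂ z)‖ₑ with hNJ
      have hNJt : NJ ≠ ∞ := (qd_J_lt_top hd (ρ + 1)).ne
      rw [ENNReal.tendsto_nhds_zero]
      intro ε hε
      obtain ⟨τ, hτ, hτ'⟩ : ∃ τ : ℝ, 0 < τ ∧ ENNReal.ofReal τ * NJ ≤ ε / 2 := by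
        have hε2 : 0 < ε / 2 := ENNReal.half_pos hε.ne'
        obtain ⟨τ, hτ, h1⟩ := ENNReal.exists_nnreal_pos_mul_lt hNJt hε2.ne'
        exact ⟨τ, hτ, by simpa using h1.le⟩
      have hE2 : Tendsto (fun n => ENNReal.ofReal C * E n) atTop (𝓝 0) := by
        have := ENNReal.Tendsto.const_mul (a := ENNReal.ofReal C) hF3 (Or.inr ENNReal.ofReal_ne_top)
        simpa using this
      have hE3 := (ENNReal.tendsto_nhds_zero.1 hE2) (ε / 2) (ENNReal.half_pos hε.ne')
      obtain ⟨σ, hσ, hσ'⟩ := Metric.uniformContinuous_iff.1 hduc τ hτ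
      filter_upwards [hE3, Metric.tendstoUniformlyOn_iff.1 hF2 σ hσ] with n hn1 hn2
      calc _ ≤ ∫⁻ z in B, (ENNReal.ofReal C *
              ‖qdW (fderiv ℝ (F n) z 1) (fderiv ℝ (F n) z I) - qdW (g₁ z) (g₂ z)‖ₑ
              + ENNReal.ofReal τ * ‖qdW (g₁ z) (g₂ z)‖ₑ) := by
            refine setLIntegral_mono' isClosed_closedBall.measurableSet fun z hz => ?_
            have e1 : ∀ A J : ℝ, φ z * d (F n z) * A - φ z * d (f z) * J
              = φ z * d (F n z) * (A - J) + φ z * (d (F n z) - d (f z)) * J := by intros; ring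
            rw [e1]
            refine (enorm_add_le _ _).trans (add_le_add ?_ ?_)
            · rw [enorm_mul]
              gcongr
              rw [← ofReal_norm]
              apply ENNReal.ofReal_le_ofReal
              rw [norm_mul]
              calc _ ≤ 1 * C := mul_le_mul (hφle z) (hC _) (norm_nonneg _) zero_le_one
                _ = C := one_mul C
            · rw [enorm_mul]
              gcongr
              rw [← ofReal_norm]
              apply ENNReal.ofReal_le_ofReal
              rw [norm_mul]
              have h3 : ‖d (F n z) - d (f z)‖ ≤ τ := by
                rw [← dist_eq_norm]
                exact (hσ' (by rw [dist_comm]; exact hn2 z hz)).le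
              calc _ ≤ 1 * τ := mul_le_mul (hφle z) h3 (norm_nonneg _) zero_le_one
                _ = τ := one_mul τ
        _ = ENNReal.ofReal C * E n + ENNReal.ofReal τ * NJ := by
            rw [lintegral_add_right', lintegral_const_mul' _ _ ENNReal.ofReal_ne_top,
              lintegral_const_mul' _ _ ENNReal.ofReal_ne_top]
            exact hJm.enorm.const_mul _
        _ ≤ ε / 2 + ε / 2 := add_le_add hn1 hτ'
        _ = ε := ENNReal.add_halves ε
  rw [hres (fun z => d (f z))]
  refine tendsto_nhds_unique hlim ?_
  refine Tendsto.congr' ?_ tendsto_const_nhds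
  filter_upwards [hvan] with n hn
  rw [← hn, hres (fun z => d (F n z))]
lemma qd_trans_inv {π : Measure ℂ} [IsFiniteMeasureOnCompacts π]
    (hz : ∀ h : ℂ → ℝ, ContDiff ℝ (⊤ : ℕ∞) h → HasCompactSupport h → ∀ e : ℂ,
      ∫ y, fderiv ℝ h y e ∂π = 0)
    {h : ℂ → ℝ} (hh : ContDiff ℝ (⊤ : ℕ∞) h) (hc : HasCompactSupport h) (a : ℂ) :
    ∫ y, h (y + a) ∂π = ∫ y, h y ∂π := by
  have hci : ∀ u : ℂ → ℝ, Continuous u → HasCompactSupport u → ∀ b : ℂ,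
      Integrable (fun y => u (y + b)) π := fun u hu hcu b =>
    (hu.comp (continuous_id.add continuous_const)).integrable_of_hasCompactSupport
      (hcu.comp_homeomorph (Homeomorph.addRight b))
  have hdc : Continuous (fun w => fderiv ℝ h w a) :=
    (hh.continuous_fderiv (by simp)).clm_apply continuous_const
  have hdcs : HasCompactSupport (fun w => fderiv ℝ h w a) := hc.fderiv_apply (𝕜 := ℝ) a
  obtain ⟨C, hC⟩ := hdcs.exists_bound_of_continuous hdc
  have hC0 : 0 ≤ C := (norm_nonneg _).trans (hC 0)
  obtain ⟨R, hR⟩ := hdcs.isCompact.isBounded.subset_closedBall (0 : ℂ)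
  have key : ∀ s₀ : ℝ, HasDerivAt (fun s : ℝ => ∫ y, h (y + s * a) ∂π) 0 s₀ := by
    intro s₀
    set S := closedBall (0 : ℂ) (R + (|s₀| + 1) * ‖a‖) with hS
    have h1 := hasDerivAt_integral_of_dominated_loc_of_deriv_le (μ := π)
      (F := fun (s : ℝ) y => h (y + s * a)) (F' := fun (s : ℝ) y => fderiv ℝ h (y + s * a) a)
      (x₀ := s₀) (s := ball s₀ 1) (bound := S.indicator fun _ => C)
      (ball_mem_nhds _ one_pos)
      (Eventually.of_forall fun s => (hci h hh.continuous hc _).aestronglyMeasurable)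
      (hci h hh.continuous hc _) (hci _ hdc hdcs _).aestronglyMeasurable
      (ae_of_all _ ?_) ?_ (ae_of_all _ ?_)
    · have h2 := h1.2
      have h3 := hz (fun y => h (y + s₀ * a))
        (hh.comp (contDiff_id.add contDiff_const))
        (hc.comp_homeomorph (Homeomorph.addRight _)) a
      simp only [fderiv_comp_add_right] at h3
      rwa [h3] at h2
    · intro y s hs
      by_cases hy : y ∈ S
      · rw [indicator_of_mem hy]; exact hC _
      · rw [indicator_of_notMem hy]
        have : fderiv ℝ h (y + s * a) a = 0 := by
          by_contra hne
          have h4 := hR (subset_tsupport (fun w => fderiv ℝ h w a) hne)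
          apply hy
          rw [mem_closedBall_zero_iff] at h4 ⊢
          have h5 : ‖y‖ ≤ ‖y + s * a‖ + ‖(s : ℂ) * a‖ := by
            simpa using norm_sub_le (y + s * a) (s * a)
          have h6 : |s| ≤ |s₀| + 1 := by
            rw [mem_ball, Real.dist_eq] at hs
            have := abs_sub_abs_le_abs_sub s s₀
            linarith
          rw [norm_mul, Complex.norm_real, Real.norm_eq_abs] at h5
          have := mul_le_mul_of_nonneg_right h6 (norm_nonneg a)
          linarith
        rw [this, norm_zero]
    · refine (integrable_indicator_iff isClosed_closedBall.measurableSet).2 ?_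
      exact integrableOn_const (isCompact_closedBall _ _).measure_lt_top.ne
    · intro y s hs
      have hd : HasDerivAt (fun s : ℝ => y + (s : ℂ) * a) a s := by
        have := (Complex.ofRealCLM.hasDerivAt (x := s)).mul_const a
        simpa using this.const_add y
      exact ((hh.differentiable (by simp)) _).hasFDerivAt.comp_hasDerivAt s hd
  have := is_const_of_deriv_eq_zero (fun s => (key s).differentiableAt) (fun s => (key s).deriv) 1 0
  simpa using this

open scoped Pointwise in
lemma qd_haar {π : Measure ℂ} [IsFiniteMeasureOnCompacts π]
    (hz : ∀ h : ℂ → ℝ, ContDiff ℝ (⊤ : ℕ∞) h → HasCompactSupport h → ∀ e : ℂ,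
      ∫ y, fderiv ℝ h y e ∂π = 0)
    {ξ η : ℂ → ℝ} (hξ : ContDiff ℝ (⊤ : ℕ∞) ξ) (hξc : HasCompactSupport ξ)
    (hη : ContDiff ℝ (⊤ : ℕ∞) η) (hηc : HasCompactSupport η) :
    (∫ w, ξ w) * (∫ y, η y ∂π) = (∫ w, η w) * (∫ y, ξ y ∂π) := by
  have swap : ∀ {ξ η : ℂ → ℝ}, ContDiff ℝ (⊤ : ℕ∞) ξ → HasCompactSupport ξ →
      ContDiff ℝ (⊤ : ℕ∞) η → HasCompactSupport η →
      (∫ w, ξ w) * (∫ y, η y ∂π) = ∫ y, (∫ w, ξ w * η (y - w)) ∂π := by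
    intro ξ η hξ hξc hη hηc
    rw [← integral_integral_swap_of_hasCompactSupport (f := fun w y => ξ w * η (y - w))]
    · rw [← integral_mul_const]
      congr 1; ext w
      rw [integral_const_mul]
      congr 1
      have := qd_trans_inv hz hη hηc (-w)
      simpa [sub_eq_add_neg] using this.symm
    · have h1 := hξ.continuous
      have h2 := hη.continuous
      simp only [Function.uncurry_def]
      fun_prop
    · have hK : IsCompact (tsupport ξ ×ˢ (tsupport ξ + tsupport η)) :=
        hξc.isCompact.prod (hξc.isCompact.add hηc.isCompact)
      refine HasCompactSupport.intro hK ?_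
      rintro ⟨w, y⟩ hwy
      by_contra hne
      simp only [Function.uncurry_apply_pair] at hne
      have hw := subset_tsupport ξ (left_ne_zero_of_mul hne)
      have hy := subset_tsupport η (right_ne_zero_of_mul hne)
      exact hwy ⟨hw, by simpa using add_mem_add hw hy⟩
  rw [swap hξ hξc hη hηc, swap hη hηc hξ hξc]
  congr 1; ext y
  rw [← integral_sub_left_eq_self (fun w => ξ w * η (y - w)) volume y]
  simp [mul_comm]

lemma qd_nu_map_zero (f : ℂ ≃ₜ ℂ) {g₁ g₂ : ℂ → ℂ} (hd : QdData f g₁ g₂)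
    (hJ : ∀ᵐ z, 0 ≤ qdW (g₁ z) (g₂ z)) (h : ℂ → ℝ) (hh : ContDiff ℝ (⊤ : ℕ∞) h)
    (hc : HasCompactSupport h) (e : ℂ) :
    ∫ y, fderiv ℝ h y e ∂((qdNu g₁ g₂).map f) = 0 := by
  rw [f.measurableEmbedding.integral_map, qd_nu_integral hd hJ]
  exact qd_zero f hd hh hc e

lemma qd_energy (f : ℂ ≃ₜ ℂ) {g₁ g₂ : ℂ → ℂ} (hd : QdData f g₁ g₂) {K : ℝ} (hK : 0 ≤ K)
    (hJ : ∀ᵐ z, 0 ≤ qdW (g₁ z) (g₂ z))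
    (hKJ : ∀ᵐ z, ‖g₁ z‖ ^ 2 + ‖g₂ z‖ ^ 2 ≤ K * qdW (g₁ z) (g₂ z)) :
    ∃ C : ℝ, 0 ≤ C ∧ ∀ (w₀ : ℂ) (ρ : ℝ), 0 < ρ →
      ∫⁻ z in f ⁻¹' closedBall w₀ ρ, (‖g₁ z‖ₑ ^ 2 + ‖g₂ z‖ₑ ^ 2) ≤ ENNReal.ofReal (C * ρ ^ 2) := by
  set π := (qdNu g₁ g₂).map f with hπ
  have := qd_nu_finite hd
  have : IsFiniteMeasureOnCompacts π := by
    refine ⟨fun S hS => ?_⟩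
    rw [hπ, f.measurableEmbedding.map_apply]
    exact (f.isCompact_preimage.2 hS).measure_lt_top
  have hz := qd_nu_map_zero f hd hJ
  let ηb : ContDiffBump (0 : ℂ) := ⟨1, 2, one_pos, by norm_num⟩
  let η : ℂ → ℝ := ηb
  have hη1 : ContDiff ℝ (⊤ : ℕ∞) η := ηb.contDiff
  have hη2 : HasCompactSupport η := ηb.hasCompactSupport
  have hIpos : 0 < ∫ w, η w := ηb.integral_pos
  have hPnn : 0 ≤ ∫ y, η y ∂π := integral_nonneg fun y => ηb.nonneg
  refine ⟨K * ∫ y, η y ∂π, by positivity, fun w₀ ρ hρ => ?_⟩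
  set ξ : ℂ → ℝ := fun y => η (ρ⁻¹ • (y - w₀)) with hξ
  have hξ1 : ContDiff ℝ (⊤ : ℕ∞) ξ :=
    hη1.comp ((contDiff_id.sub contDiff_const).const_smul _)
  have hξ2 : HasCompactSupport ξ := by
    refine HasCompactSupport.intro (isCompact_closedBall w₀ (2 * ρ)) fun y hy => ?_
    apply ηb.zero_of_le_dist
    rw [mem_closedBall, not_le, dist_eq_norm] at hy
    rw [dist_zero_right, norm_smul, norm_inv, Real.norm_of_nonneg hρ.le, inv_mul_eq_div, le_div_iff₀ hρ]
    exact hy.le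
  have hξI : ∫ w, ξ w = ρ ^ 2 * ∫ w, η w := by
    have h1 := integral_sub_right_eq_self (μ := volume) (fun w : ℂ => η (ρ⁻¹ • w)) w₀
    rw [hξ, h1, Measure.integral_comp_inv_smul, Complex.finrank_real_complex, abs_of_nonneg (by positivity),
      smul_eq_mul]
  have h1 := qd_haar hz hξ1 hξ2 hη1 hη2
  have h2 : ∫ y, ξ y ∂π = ρ ^ 2 * ∫ y, η y ∂π := by
    rw [hξI] at h1
    apply mul_left_cancel₀ hIpos.ne'
    rw [← h1]; ring
  have hξnn : ∀ y, 0 ≤ ξ y := fun y => ηb.nonneg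
  have hξone : ∀ y ∈ closedBall w₀ ρ, ξ y = 1 := by
    intro y hy
    apply ηb.one_of_mem_closedBall
    rw [mem_closedBall, dist_eq_norm] at hy
    rw [mem_closedBall, dist_zero_right, norm_smul, norm_inv, Real.norm_of_nonneg hρ.le,
      inv_mul_eq_div, div_le_iff₀ hρ]
    change _ ≤ 1 * ρ
    simpa using hy
  have hmeas : MeasurableSet (f ⁻¹' closedBall w₀ ρ) :=
    (isClosed_closedBall.preimage f.continuous).measurableSet
  have h3 : ∫⁻ z in f ⁻¹' closedBall w₀ ρ, ENNReal.ofReal (qdW (g₁ z) (g₂ z)) ≤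
      ENNReal.ofReal (∫ y, ξ y ∂π) := by
    have : ∫⁻ z in f ⁻¹' closedBall w₀ ρ, ENNReal.ofReal (qdW (g₁ z) (g₂ z)) =
        π (closedBall w₀ ρ) := by
      rw [hπ, f.measurableEmbedding.map_apply, qdNu, withDensity_apply _ hmeas]
    rw [this, ofReal_integral_eq_lintegral_ofReal
      (hξ1.continuous.integrable_of_hasCompactSupport hξ2) (ae_of_all _ hξnn),
      ← setLIntegral_one]
    refine (setLIntegral_mono' isClosed_closedBall.measurableSet fun y hy => ?_).trans
      (setLIntegral_le_lintegral _ _)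
    rw [hξone y hy]; simp
  calc _ ≤ ∫⁻ z in f ⁻¹' closedBall w₀ ρ, ENNReal.ofReal K * ENNReal.ofReal (qdW (g₁ z) (g₂ z)) := by
        refine lintegral_mono_ae (ae_restrict_of_ae ?_)
        filter_upwards [hKJ] with z hz
        rw [← ENNReal.ofReal_mul hK]
        refine le_trans (le_of_eq ?_) (ENNReal.ofReal_le_ofReal hz)
        rw [ENNReal.ofReal_add (by positivity) (by positivity), ENNReal.ofReal_pow (norm_nonneg _),
          ENNReal.ofReal_pow (norm_nonneg _), ofReal_norm, ofReal_norm]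
    _ = ENNReal.ofReal K * ∫⁻ z in f ⁻¹' closedBall w₀ ρ, ENNReal.ofReal (qdW (g₁ z) (g₂ z)) :=
        lintegral_const_mul' _ _ ENNReal.ofReal_ne_top
    _ ≤ ENNReal.ofReal K * ENNReal.ofReal (∫ y, ξ y ∂π) := by gcongr
    _ = _ := by
        rw [← ENNReal.ofReal_mul hK, h2]; congr 1; ring

lemma qd_pointwise {k : ℝ} (hk : k < 1) (hk0 : 0 ≤ k) {a b m : ℂ} (hm : ‖m‖ ≤ k)
    (h : (a + I * b) / 2 = m * ((a - I * b) / 2)) :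
    0 ≤ qdW a b ∧ ‖a‖ ^ 2 + ‖b‖ ^ 2 ≤ (2 * (1 + k ^ 2) / (1 - k ^ 2)) * qdW a b := by
  have hk2 : 0 < 1 - k ^ 2 := by nlinarith
  have e1 : ‖a + I * b‖ ^ 2 = ‖a‖ ^ 2 + ‖b‖ ^ 2 - 2 * qdW a b := by
    simp only [Complex.sq_norm, normSq_apply, qdW]; simp; ring
  have e2 : ‖a - I * b‖ ^ 2 = ‖a‖ ^ 2 + ‖b‖ ^ 2 + 2 * qdW a b := by
    simp only [Complex.sq_norm, normSq_apply, qdW]; simp; ring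
  have h2 : a + I * b = m * (a - I * b) := by linear_combination 2 * h
  have h3 : ‖a + I * b‖ ^ 2 ≤ k ^ 2 * ‖a - I * b‖ ^ 2 := by
    rw [h2, norm_mul, mul_pow]
    gcongr
  rw [e1, e2] at h3
  have hS : 0 ≤ ‖a‖ ^ 2 + ‖b‖ ^ 2 := by positivity
  have h4 : ‖a‖ ^ 2 + ‖b‖ ^ 2 ≤ (2 * (1 + k ^ 2) / (1 - k ^ 2)) * qdW a b := by
    rw [div_mul_eq_mul_div, le_div_iff₀ hk2]
    linarith
  refine ⟨?_, h4⟩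
  have : 0 ≤ (1 - k ^ 2) * (‖a‖ ^ 2 + ‖b‖ ^ 2) := by positivity
  have h5 : 0 ≤ (2 * (1 + k ^ 2)) * qdW a b := by linarith
  exact nonneg_of_mul_nonneg_right h5 (by positivity)
lemma qd_circle {E : Type*} [NormedAddCommGroup E] [NormedSpace ℝ E] [CompleteSpace E]
    {G : ℂ → E} (hG : ContDiff ℝ 1 G) (x : ℂ) {r : ℝ} (hr : 0 < r) {a b : ℂ}
    (ha : a ∈ sphere x r) (hb : b ∈ sphere x r) :
    ‖G a - G b‖ₑ ≤ ∫⁻ t in Ioo (-Real.pi) Real.pi,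
      ENNReal.ofReal r * ‖fderiv ℝ G (circleMap x r t)‖ₑ := by
  have hpar : ∀ a ∈ sphere x r, ∃ t ∈ Icc (-Real.pi) Real.pi, circleMap x r t = a := by
    intro a ha
    refine ⟨arg (a - x), ⟨(arg_mem_Ioc _).1.le, (arg_mem_Ioc _).2⟩, ?_⟩
    have h1 := norm_mul_exp_arg_mul_I (a - x)
    rw [mem_sphere, dist_eq_norm] at ha
    rw [ha] at h1
    rw [circleMap, h1]; ring
  obtain ⟨s, hs, rfl⟩ := hpar a ha
  obtain ⟨t, ht, rfl⟩ := hpar b hb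
  have hder : ∀ u : ℝ, HasDerivAt (fun u => G (circleMap x r u))
      (fderiv ℝ G (circleMap x r u) (circleMap 0 r u * I)) u := fun u =>
    ((hG.differentiable (by simp)) _).hasFDerivAt.comp_hasDerivAt u (hasDerivAt_circleMap x r u)
  have hcont : Continuous (fun u : ℝ => fderiv ℝ G (circleMap x r u) (circleMap 0 r u * I)) := by
    have h1 := hG.continuous_fderiv (by simp)
    have h2 := continuous_circleMap x r
    have h3 := continuous_circleMap 0 r
    exact (h1.comp h2).clm_apply (h3.mul continuous_const)
  rw [← intervalIntegral.integral_eq_sub_of_hasDerivAt (fun u _ => hder u)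
    (hcont.intervalIntegrable t s), intervalIntegral.intervalIntegral_eq_integral_uIoc, enorm_smul]
  have h1 : ‖(if t ≤ s then (1 : ℝ) else -1)‖ₑ = 1 := by split_ifs <;> simp
  rw [h1, one_mul]
  refine (enorm_integral_le_lintegral_enorm _).trans ?_
  rw [restrict_Ioo_eq_restrict_Ioc]
  refine (lintegral_mono_set ?_).trans (lintegral_mono fun u => ?_)
  · intro u hu
    rcases le_total t s with h | h
    · rw [uIoc_of_le h] at hu; exact ⟨ht.1.trans_lt hu.1, hu.2.trans hs.2⟩
    · rw [uIoc_of_ge h] at hu; exact ⟨hs.1.trans_lt hu.1, hu.2.trans ht.2⟩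
  · have h2 : ‖circleMap 0 r u * I‖ = r := by
      rw [norm_mul, norm_I, mul_one, norm_circleMap_zero, abs_of_pos hr]
    have h3 := (fderiv ℝ G (circleMap x r u)).le_opNorm (circleMap 0 r u * I)
    rw [h2] at h3
    rw [← ofReal_norm, ← ofReal_norm, ← ENNReal.ofReal_mul hr.le]
    exact ENNReal.ofReal_le_ofReal (h3.trans_eq (mul_comm _ _))

lemma qd_cs_one (u : ℝ → ℝ≥0∞) (hu : Measurable u) :
    (∫⁻ t in Ioo (-Real.pi) Real.pi, u t) ^ 2 ≤
      ENNReal.ofReal (2 * Real.pi) * ∫⁻ t in Ioo (-Real.pi) Real.pi, u t ^ 2 := by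
  have h := ENNReal.lintegral_mul_le_Lp_mul_Lq (volume.restrict (Ioo (-Real.pi) Real.pi))
    Real.HolderConjugate.two_two (aemeasurable_const (b := (1 : ℝ≥0∞))) hu.aemeasurable
  simp only [Pi.mul_apply, one_mul, ENNReal.one_rpow, lintegral_const, Measure.restrict_apply_univ,
    Real.volume_Ioo] at h
  have h2 := pow_le_pow_left₀ (zero_le) h 2
  rw [mul_pow, ← ENNReal.rpow_natCast, ← ENNReal.rpow_natCast, ← ENNReal.rpow_natCast,
    ← ENNReal.rpow_mul, ← ENNReal.rpow_mul] at h2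
  norm_num at h2
  have h5 : 2 * Real.pi = Real.pi + Real.pi := by ring
  rw [h5]
  exact h2

lemma qd_length_area {E : Type*} [NormedAddCommGroup E] [NormedSpace ℝ E] [CompleteSpace E]
    {G : ℂ → E} (hG : ContDiff ℝ 1 G) (x : ℂ) {r₁ r₂ c : ℝ} (h₁ : 0 < r₁) (h₁₂ : r₁ < r₂)
    (hc : 0 ≤ c)
    (H : ∀ r ∈ Ioo r₁ r₂, ∃ a ∈ sphere x r, ∃ b ∈ sphere x r, c ≤ ‖G a - G b‖) :
    ENNReal.ofReal (c ^ 2 * Real.log (r₂ / r₁)) ≤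
      ENNReal.ofReal (2 * Real.pi) * ∫⁻ z in ball x r₂, ‖fderiv ℝ G z‖ₑ ^ 2 := by
  have hDc : Continuous (fderiv ℝ G) := hG.continuous_fderiv (by simp)
  set v : ℂ → ℝ≥0∞ := (ball x r₂).indicator (fun z => ‖fderiv ℝ G z‖ₑ ^ 2) with hv
  have hvm : Measurable v := (hDc.enorm.measurable.pow_const 2).indicator isOpen_ball.measurableSet
  have e1 : ∫⁻ z in ball x r₂, ‖fderiv ℝ G z‖ₑ ^ 2 = ∫⁻ z, v (x + z) := by
    rw [lintegral_add_left_eq_self, hv, lintegral_indicator isOpen_ball.measurableSet]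
  have hpm : Measurable (fun p : ℝ × ℝ => ENNReal.ofReal p.1 * v (circleMap x p.1 p.2)) := by
    have : Continuous (fun p : ℝ × ℝ => circleMap x p.1 p.2) := by
      unfold circleMap; fun_prop
    exact (ENNReal.measurable_ofReal.comp measurable_fst).mul (hvm.comp this.measurable)
  have e2 : ∫⁻ z, v (x + z) = ∫⁻ r in Ioi (0 : ℝ), ∫⁻ t in Ioo (-Real.pi) Real.pi,
      ENNReal.ofReal r * v (circleMap x r t) := by
    rw [← Complex.lintegral_comp_polarCoord_symm, _root_.polarCoord_target,
      Measure.volume_eq_prod, ← Measure.prod_restrict]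
    rw [← lintegral_prod _ hpm.aemeasurable]
    congr 1; ext p
    rw [smul_eq_mul, Complex.polarCoord_symm_apply, circleMap, Complex.exp_mul_I]
    push_cast
    rfl
  have e3 : ENNReal.ofReal (Real.log (r₂ / r₁)) = ∫⁻ r in Ioc r₁ r₂, ENNReal.ofReal (1 / r) := by
    rw [← integral_one_div_of_pos h₁ (h₁.trans h₁₂), intervalIntegral.integral_of_le h₁₂.le,
      ofReal_integral_eq_lintegral_ofReal]
    · have : IntervalIntegrable (fun r : ℝ => 1 / r) volume r₁ r₂ := by
        apply ContinuousOn.intervalIntegrable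
        rw [uIcc_of_le h₁₂.le]
        intro r hr
        exact (continuousAt_const.div continuousAt_id (h₁.trans_le hr.1).ne').continuousWithinAt
      exact (intervalIntegrable_iff_integrableOn_Ioc_of_le h₁₂.le).1 this
    · filter_upwards [ae_restrict_mem measurableSet_Ioc] with r hr
      have := h₁.trans hr.1
      positivity
  rw [ENNReal.ofReal_mul (by positivity), e3, e1, e2,
    ← lintegral_const_mul' _ _ ENNReal.ofReal_ne_top,
    ← lintegral_const_mul' _ _ ENNReal.ofReal_ne_top, ← restrict_Ioo_eq_restrict_Ioc]
  refine (setLIntegral_mono' measurableSet_Ioo fun r hr => ?_).trans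
    (lintegral_mono_set fun r hr => h₁.trans hr.1)
  have hr0 : 0 < r := h₁.trans hr.1
  obtain ⟨a, ha, b, hb, hab⟩ := H r hr
  have h1 := qd_circle hG x hr0 ha hb
  have h2 : ENNReal.ofReal c ≤ ∫⁻ t in Ioo (-Real.pi) Real.pi,
      ENNReal.ofReal r * ‖fderiv ℝ G (circleMap x r t)‖ₑ := by
    refine le_trans ?_ h1
    rw [← ofReal_norm]; exact ENNReal.ofReal_le_ofReal hab
  have hcm : Continuous fun t => fderiv ℝ G (circleMap x r t) := hDc.comp (continuous_circleMap x r)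
  have h3 := (pow_le_pow_left₀ zero_le h2 2).trans (qd_cs_one _ (hcm.enorm.measurable.const_mul _))
  have h4 : ∀ t, v (circleMap x r t) = ‖fderiv ℝ G (circleMap x r t)‖ₑ ^ 2 := by
    intro t
    rw [hv, indicator_of_mem]
    rw [mem_ball, dist_eq_norm, circleMap_sub_center, norm_circleMap_zero, abs_of_pos hr0]
    exact hr.2
  simp_rw [h4]
  simp_rw [mul_pow] at h3
  rw [lintegral_const_mul' _ _ (by finiteness)] at h3 ⊢
  rw [ENNReal.ofReal_div_of_pos hr0, ENNReal.ofReal_one, ENNReal.ofReal_pow hc, one_div]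
  calc _ ≤ (ENNReal.ofReal (2 * Real.pi) * (ENNReal.ofReal r ^ 2 *
        ∫⁻ t in Ioo (-Real.pi) Real.pi, ‖fderiv ℝ G (circleMap x r t)‖ₑ ^ 2)) *
        (ENNReal.ofReal r)⁻¹ := by gcongr
    _ = ENNReal.ofReal (2 * Real.pi) * ((ENNReal.ofReal r * (ENNReal.ofReal r * (ENNReal.ofReal r)⁻¹)) *
        ∫⁻ t in Ioo (-Real.pi) Real.pi, ‖fderiv ℝ G (circleMap x r t)‖ₑ ^ 2) := by ring
    _ = _ := by
      rw [ENNReal.mul_inv_cancel (by simpa using hr0) ENNReal.ofReal_ne_top, mul_one]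
lemma qd_meet (f : ℂ ≃ₜ ℂ) {x : ℂ} {r : ℝ} {S : Set ℂ} (hS : IsPreconnected S) {u v : ℂ}
    (hu : u ∈ S) (hv : v ∈ S) (hur : dist (f.symm u) x ≤ r) (hvr : r ≤ dist (f.symm v) x) :
    ∃ a ∈ sphere x r, f a ∈ S := by
  have hc : ContinuousOn (fun w => dist (f.symm w) x) S :=
    (f.symm.continuous.dist continuous_const).continuousOn
  obtain ⟨w, hw, hwr⟩ := hS.intermediate_value hu hv hc ⟨hur, hvr⟩
  exact ⟨f.symm w, hwr, by simpa using hw⟩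

lemma qd_ray (f : ℂ ≃ₜ ℂ) {x : ℂ} {r : ℝ} {p v : ℂ} (hv : v ≠ 0)
    (hp : dist (f.symm p) x ≤ r) : ∃ a ∈ sphere x r, ∃ t : ℝ, 0 ≤ t ∧ f a = p + t • v := by
  have hS : IsPreconnected ((fun t : ℝ => p + t • v) '' Ici 0) :=
    isPreconnected_Ici.image _ (by fun_prop)
  obtain ⟨B, hB⟩ := ((isCompact_closedBall x r).image f.continuous).isBounded.subset_closedBall p
  have hv' : 0 < ‖v‖ := norm_pos_iff.2 hv
  have hB0 : 0 ≤ B := by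
    have : p ∈ closedBall p B := hB ⟨f.symm p, hp, by simp⟩
    simpa using this
  have hfar : r ≤ dist (f.symm (p + ((B + 1) / ‖v‖) • v)) x := by
    by_contra hlt
    have h1 := hB ⟨f.symm (p + ((B + 1) / ‖v‖) • v), (not_le.1 hlt).le, rfl⟩
    rw [f.apply_symm_apply, mem_closedBall, dist_eq_norm, add_sub_cancel_left, norm_smul,
      Real.norm_of_nonneg (by positivity), div_mul_cancel₀ _ hv'.ne'] at h1
    linarith
  obtain ⟨a, ha, t, ht, hat⟩ := qd_meet f hS (u := p) (v := p + ((B + 1) / ‖v‖) • v)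
    ⟨0, self_mem_Ici, by simp⟩ ⟨(B + 1) / ‖v‖, by rw [mem_Ici]; positivity, rfl⟩ hp hfar
  exact ⟨a, ha, t, ht, hat.symm⟩

/-- Three points on the image of a circle. -/
lemma qd_three (f : ℂ ≃ₜ ℂ) {x p y : ℂ} {r M : ℝ} (hM : 0 < M) (hp : r ≤ dist p x)
    (hpM : dist (f p) (f x) ≤ M) (hy : dist y x ≤ r) (hyM : M / 4 < dist (f y) (f x)) :
    ∃ a ∈ sphere x r, ∃ b ∈ sphere x r, ∃ c ∈ sphere x r,
      dist (f a) (f x) ≤ M ∧ M / 4 ≤ dist (f b) (f c) := by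
  have hr : 0 ≤ r := dist_nonneg.trans hy
  obtain ⟨a, ha, haS⟩ := qd_meet f (x := x) (r := r)
    (convex_segment (𝕜 := ℝ) (f x) (f p)).isPreconnected
    (left_mem_segment ℝ (f x) (f p)) (right_mem_segment ℝ _ _) (by simpa using hr) (by simpa using hp)
  have hv : f y - f x ≠ 0 := by
    intro h
    rw [dist_eq_norm, h, norm_zero] at hyM
    linarith
  obtain ⟨b, hb, t, ht, hbt⟩ := qd_ray f (x := x) (r := r) (p := f y) hv (by simpa using hy)
  obtain ⟨c, hc, s, hs, hcs⟩ := qd_ray f (x := x) (r := r) (p := f x) (neg_ne_zero.2 hv)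
    (by simpa using hr)
  refine ⟨a, ha, b, hb, c, hc, ?_, ?_⟩
  · have := (convex_closedBall (f x) M).segment_subset (mem_closedBall_self hM.le)
      (mem_closedBall.2 hpM) haS
    exact this
  · have e : f b - f c = (1 + t + s) • (f y - f x) := by
      rw [hbt, hcs]; module
    rw [dist_eq_norm, e, norm_smul, Real.norm_of_nonneg (by positivity), ← dist_eq_norm]
    nlinarith [dist_nonneg (x := f y) (y := f x), mul_nonneg ht (dist_nonneg (x := f y) (y := f x)),
      mul_nonneg hs (dist_nonneg (x := f y) (y := f x))]

/-- The truncation map. -/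
noncomputable def qdChi : ContDiffBump (0 : ℂ) := ⟨2, 3, by norm_num, by norm_num⟩

noncomputable def qdT (u : ℂ) : ℂ × ℝ := (qdChi u • u, qdChi u)

lemma qdT_contDiff : ContDiff ℝ (⊤ : ℕ∞) qdT :=
  (qdChi.contDiff.smul contDiff_id).prodMk qdChi.contDiff

lemma qdT_compact : HasCompactSupport qdT := by
  refine HasCompactSupport.intro (isCompact_closedBall (0 : ℂ) 3) fun u hu => ?_
  have : qdChi u = 0 := qdChi.zero_of_le_dist (by
    rw [mem_closedBall, not_le] at hu; exact hu.le)
  simp [qdT, this]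

lemma qdT_osc {a b c : ℂ} (ha : ‖a‖ ≤ 1) (hbc : 1 / 4 ≤ ‖b - c‖) :
    1 / 32 ≤ ‖qdT a - qdT b‖ ∨ 1 / 32 ≤ ‖qdT a - qdT c‖ := by
  by_contra hcon
  push Not at hcon
  obtain ⟨h1, h2⟩ := hcon
  have hχa : qdChi a = 1 := qdChi.one_of_mem_closedBall (by
    rw [mem_closedBall, dist_zero_right]; exact ha.trans (by simp [qdChi]))
  have key : ∀ d : ℂ, ‖qdT a - qdT d‖ < 1 / 32 →
      ‖a - qdChi d • d‖ < 1 / 32 ∧ ‖qdChi d • d - d‖ ≤ 3 / 32 := by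
    intro d hd
    rw [qdT, qdT, Prod.mk_sub_mk, Prod.norm_def, max_lt_iff, hχa, one_smul] at hd
    obtain ⟨hd1, hd2⟩ := hd
    refine ⟨hd1, ?_⟩
    have hle : qdChi d ≤ 1 := qdChi.le_one
    simp only [Real.norm_eq_abs] at hd2
    rw [abs_of_nonneg (by linarith)] at hd2
    have hd3 : ‖d‖ ≤ 3 := by
      by_contra h3
      have : qdChi d = 0 := qdChi.zero_of_le_dist (by
        rw [dist_zero_right]; exact (not_le.1 h3).le)
      rw [this] at hd2; norm_num at hd2
    have e : qdChi d • d - d = (qdChi d - 1) • d := by rw [sub_smul, one_smul]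
    rw [e, norm_smul, Real.norm_eq_abs, abs_sub_comm, abs_of_nonneg (by linarith)]
    nlinarith [norm_nonneg d]
  obtain ⟨b1, b2⟩ := key b h1
  obtain ⟨c1, c2⟩ := key c h2
  have e : b - c = -(qdChi b • b - b) - (a - qdChi b • b) + (a - qdChi c • c)
      + (qdChi c • c - c) := by ring
  have : ‖b - c‖ ≤ ‖qdChi b • b - b‖ + ‖a - qdChi b • b‖ + ‖a - qdChi c • c‖
      + ‖qdChi c • c - c‖ := by
    rw [e]
    refine (norm_add_le _ _).trans ?_
    gcongr
    refine (norm_add_le _ _).trans ?_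
    gcongr
    refine (norm_sub_le _ _).trans ?_
    rw [norm_neg]
  linarith

lemma qdT_bound : ∃ C₀ : ℝ, 0 < C₀ ∧ (∀ u, ‖fderiv ℝ qdT u‖ ≤ C₀) ∧
    (∀ u, 3 < ‖u‖ → ‖fderiv ℝ qdT u‖ = 0) := by
  obtain ⟨C, hC⟩ := (qdT_compact.fderiv (𝕜 := ℝ)).exists_bound_of_continuous
    (qdT_contDiff.continuous_fderiv (by simp))
  refine ⟨max C 1, by positivity, fun u => (hC u).trans (le_max_left _ _), fun u hu => ?_⟩
  have : qdT =ᶠ[𝓝 u] fun _ => 0 := by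
    have ho : IsOpen {v : ℂ | 3 < ‖v‖} := isOpen_lt continuous_const continuous_norm
    filter_upwards [ho.mem_nhds hu] with v hv
    have : qdChi v = 0 := qdChi.zero_of_le_dist (by
      rw [dist_zero_right]; exact le_of_lt hv)
    simp [qdT, this]
  have h0 : fderiv ℝ qdT u = 0 := by rw [this.fderiv_eq]; simp
  refine le_antisymm (ContinuousLinearMap.opNorm_le_bound _ le_rfl fun v => ?_) (norm_nonneg _)
  rw [h0]; simp

lemma qd_fderiv_sq (L : ℂ →L[ℝ] ℂ) (a b : ℂ) :
    ‖L‖ₑ ^ 2 ≤ 4 * (‖L 1 - a‖ₑ ^ 2 + ‖L I - b‖ₑ ^ 2 + (‖a‖ₑ ^ 2 + ‖b‖ₑ ^ 2)) := by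
  have h1 : ‖L‖ ≤ ‖L 1‖ + ‖L I‖ := by
    refine L.opNorm_le_bound (by positivity) fun v => ?_
    have e : L v = v.re • L 1 + v.im • L I := by
      rw [← map_smul, ← map_smul, ← map_add]; congr 1
      apply Complex.ext <;> simp
    rw [e, add_mul]
    refine (norm_add_le _ _).trans ?_
    rw [norm_smul, norm_smul, mul_comm, mul_comm ‖v.im‖]
    gcongr
    · exact abs_re_le_norm v
    · exact abs_im_le_norm v
  have h2 : ‖L 1‖ ≤ ‖L 1 - a‖ + ‖a‖ := by simpa using norm_add_le (L 1 - a) a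
  have h3 : ‖L I‖ ≤ ‖L I - b‖ + ‖b‖ := by simpa using norm_add_le (L I - b) b
  have h4 : ‖L‖ ≤ ‖L 1 - a‖ + ‖a‖ + (‖L I - b‖ + ‖b‖) := by linarith
  have h5 : ‖L‖ ^ 2 ≤ 4 * (‖L 1 - a‖ ^ 2 + ‖L I - b‖ ^ 2 + (‖a‖ ^ 2 + ‖b‖ ^ 2)) := by
    have h6 := pow_le_pow_left₀ (norm_nonneg L) h4 2
    nlinarith [sq_nonneg (‖L 1 - a‖ - ‖a‖), sq_nonneg (‖L I - b‖ - ‖b‖),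
      sq_nonneg (‖L 1 - a‖ - ‖b‖), sq_nonneg (‖L I - b‖ - ‖a‖), sq_nonneg (‖L 1 - a‖ - ‖L I - b‖),
      sq_nonneg (‖a‖ - ‖b‖)]
  have h7 := ENNReal.ofReal_le_ofReal h5
  rw [ENNReal.ofReal_mul (by norm_num), ENNReal.ofReal_add (by positivity) (by positivity),
    ENNReal.ofReal_add (by positivity) (by positivity),
    ENNReal.ofReal_add (by positivity) (by positivity)] at h7
  simpa only [ENNReal.ofReal_pow (norm_nonneg _), ofReal_norm, ENNReal.ofReal_ofNat] using h7

lemma qd_key_bound (f : ℂ ≃ₜ ℂ) {g₁ g₂ : ℂ → ℂ} (hd : QdData f g₁ g₂) {C : ℝ} (hC : 0 ≤ C)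
    (hE : ∀ (w₀ : ℂ) (ρ : ℝ), 0 < ρ →
      ∫⁻ z in f ⁻¹' closedBall w₀ ρ, (‖g₁ z‖ₑ ^ 2 + ‖g₂ z‖ₑ ^ 2) ≤ ENNReal.ofReal (C * ρ ^ 2)) :
    ∃ N : ℝ, ∀ (x p y : ℂ) (R r₁ M : ℝ), 0 < M → 0 < r₁ → r₁ < R → R ≤ dist p x →
      dist (f p) (f x) ≤ M → dist y x ≤ r₁ → M / 4 < dist (f y) (f x) →
      Real.log (R / r₁) ≤ N := by
  obtain ⟨C₀, hC₀, hT1, hT2⟩ := qdT_bound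
  refine ⟨64 ^ 2 * (2 * Real.pi * (C₀ ^ 2 * (4 * (2 + 16 * C)))), ?_⟩
  intro x p y R r₁ M hM hr₁ hrR hp hpM hy hyM
  set w₀ := f x with hw₀
  set τ : ℂ → ℂ := fun w => M⁻¹ • (w - w₀) with hτ
  have hτd : ∀ w, HasFDerivAt τ (M⁻¹ • ContinuousLinearMap.id ℝ ℂ) w := fun w =>
    ((hasFDerivAt_id w).sub_const w₀).const_smul M⁻¹
  have hτc : ContDiff ℝ (⊤ : ℕ∞) τ := (contDiff_id.sub contDiff_const).const_smul _
  set T : ℂ → ℂ × ℝ := fun w => qdT (τ w) with hT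
  have hTc : ContDiff ℝ (⊤ : ℕ∞) T := qdT_contDiff.comp hτc
  have hTd : ∀ w, fderiv ℝ T w = M⁻¹ • fderiv ℝ qdT (τ w) := by
    intro w
    have h1 := ((qdT_contDiff.differentiable (by simp)) (τ w)).hasFDerivAt.comp w (hτd w)
    rw [show T = qdT ∘ τ from rfl, h1.fderiv]
    ext <;> simp
  have hTb : ∀ w, ‖fderiv ℝ T w‖ ≤ C₀ / M := by
    intro w
    rw [hTd, norm_smul, norm_inv, Real.norm_of_nonneg hM.le, inv_mul_eq_div]
    gcongr
    exact hT1 _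
  have hTz : ∀ w, 3 * M < dist w w₀ → ‖fderiv ℝ T w‖ = 0 := by
    intro w hw
    have h0 : ‖fderiv ℝ qdT (τ w)‖ = 0 := hT2 _ ?_
    · rw [hTd, norm_smul, h0, mul_zero]
    rw [hτ, norm_smul, norm_inv, Real.norm_of_nonneg hM.le, inv_mul_eq_div, lt_div_iff₀ hM,
      ← dist_eq_norm]
    exact hw
  have hTl : ∀ u v, ‖T u - T v‖ ≤ C₀ / M * ‖u - v‖ := fun u v =>
    convex_univ.norm_image_sub_le_of_norm_fderiv_le (𝕜 := ℝ)
      (fun w _ => (hTc.differentiable (by simp)) w)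
      (fun w _ => hTb w) (mem_univ v) (mem_univ u)
  -- approximation
  set ε := min (min M (M ^ 2)) (M / (128 * C₀)) with hε
  have hε0 : 0 < ε := by positivity
  have hε1 : ε ≤ M := (min_le_left _ _).trans (min_le_left _ _)
  have hε2 : ε ≤ M ^ 2 := (min_le_left _ _).trans (min_le_right _ _)
  have hε3 : C₀ / M * ε ≤ 1 / 128 := by
    calc C₀ / M * ε ≤ C₀ / M * (M / (128 * C₀)) := by
          gcongr; exact min_le_right _ _
      _ = 1 / 128 := by field_simp
  set ρ := ‖x‖ + R with hρ
  obtain ⟨F, hF1, hF2, hF3, hF4⟩ :=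
    qd_approx hd.hf hd.hg₁ hd.hg₂ hd.hs₁ hd.hs₂ hd.hw₁ hd.hw₂ ρ hε0
  have hball : closedBall x R ⊆ closedBall (0 : ℂ) ρ := by
    intro z hz
    rw [mem_closedBall, dist_eq_norm] at hz
    rw [mem_closedBall_zero_iff]
    have := norm_add_le (z - x) x
    rw [sub_add_cancel] at this
    linarith
  have hGc : ContDiff ℝ (⊤ : ℕ∞) (fun z => T (F z)) := hTc.comp hF1
  -- oscillation
  have hosc : ∀ r ∈ Ioo r₁ R, ∃ a ∈ sphere x r, ∃ b ∈ sphere x r,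
      1 / 64 ≤ ‖T (F a) - T (F b)‖ := by
    intro r hr
    have hclose : ∀ a ∈ sphere x r, ‖T (F a) - T (f a)‖ ≤ 1 / 128 := by
      intro a ha
      refine (hTl _ _).trans (le_trans ?_ hε3)
      gcongr
      rw [← dist_eq_norm]
      exact hF2 a (hball (by rw [mem_closedBall, mem_sphere.1 ha]; exact hr.2.le))
    have htr : ∀ a ∈ sphere x r, ∀ b ∈ sphere x r, 1 / 32 ≤ ‖T (f a) - T (f b)‖ →
        1 / 64 ≤ ‖T (F a) - T (F b)‖ := by
      intro a ha b hb hab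
      have h1 := hclose a ha
      have h2 := hclose b hb
      have e : T (f a) - T (f b) = -(T (F a) - T (f a)) + (T (F a) - T (F b))
        + (T (F b) - T (f b)) := by abel
      have h3 : ‖T (f a) - T (f b)‖ ≤ ‖T (F a) - T (f a)‖ + ‖T (F a) - T (F b)‖
          + ‖T (F b) - T (f b)‖ := by
        rw [e]
        refine (norm_add_le _ _).trans ?_
        gcongr
        refine (norm_add_le _ _).trans ?_
        rw [norm_neg]
      linarith
    obtain ⟨a, ha, b, hb, c, hc, h1, h2⟩ := qd_three f hM (hr.2.le.trans hp) hpM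
      (hy.trans hr.1.le) hyM
    have h3 : ‖τ (f a)‖ ≤ 1 := by
      rw [hτ, norm_smul, norm_inv, Real.norm_of_nonneg hM.le, inv_mul_eq_div, div_le_one hM,
        ← dist_eq_norm]
      exact h1
    have h4 : 1 / 4 ≤ ‖τ (f b) - τ (f c)‖ := by
      have e : τ (f b) - τ (f c) = M⁻¹ • (f b - f c) := by
        simp only [hτ]; rw [← smul_sub]; congr 1; ring
      rw [e, norm_smul, norm_inv, Real.norm_of_nonneg hM.le, inv_mul_eq_div, le_div_iff₀ hM,
        ← dist_eq_norm]
      linarith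
    rcases qdT_osc h3 h4 with h | h
    · exact ⟨a, ha, b, hb, htr a ha b hb h⟩
    · exact ⟨a, ha, c, hc, htr a ha c hc h⟩
  have hLA := qd_length_area (hGc.of_le (by simp)) x hr₁ hrR (by norm_num : (0 : ℝ) ≤ 1 / 64) hosc
  -- energy
  have hmeas : MeasurableSet (f ⁻¹' closedBall w₀ (4 * M)) :=
    (isClosed_closedBall.preimage f.continuous).measurableSet
  have hpt : ∀ z ∈ ball x R, ‖fderiv ℝ (fun z => T (F z)) z‖ₑ ^ 2 ≤
      ENNReal.ofReal ((C₀ / M) ^ 2) * (4 * (‖fderiv ℝ F z 1 - g₁ z‖ₑ ^ 2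
        + ‖fderiv ℝ F z I - g₂ z‖ₑ ^ 2 + (f ⁻¹' closedBall w₀ (4 * M)).indicator
          (fun z => ‖g₁ z‖ₑ ^ 2 + ‖g₂ z‖ₑ ^ 2) z)) := by
    intro z hz
    have hch : fderiv ℝ (fun z => T (F z)) z = (fderiv ℝ T (F z)).comp (fderiv ℝ F z) :=
      fderiv_comp z ((hTc.differentiable (by simp)) _) ((hF1.differentiable (by simp)) _)
    by_cases hfar : 3 * M < dist (F z) w₀
    · have h0 : ‖fderiv ℝ (fun z => T (F z)) z‖ ≤ 0 := by
        rw [hch]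
        refine (ContinuousLinearMap.opNorm_comp_le _ _).trans ?_
        rw [hTz _ hfar, zero_mul]
      have h1 : ‖fderiv ℝ (fun z => T (F z)) z‖ₑ = 0 := by
        rw [← ofReal_norm, ENNReal.ofReal_eq_zero]; exact h0
      rw [h1]; simp
    · have hin : z ∈ f ⁻¹' closedBall w₀ (4 * M) := by
        have h1 := hF2 z (hball (ball_subset_closedBall hz))
        have h2 := dist_triangle_left (f z) w₀ (F z)
        rw [mem_preimage, mem_closedBall]
        rw [not_lt] at hfar
        linarith
      rw [indicator_of_mem hin]
      refine le_trans ?_ (mul_le_mul_right (qd_fderiv_sq (fderiv ℝ F z) (g₁ z) (g₂ z)) _)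
      rw [ENNReal.ofReal_pow (by positivity), ← mul_pow]
      gcongr
      rw [← ofReal_norm, ← ofReal_norm, ← ENNReal.ofReal_mul (by positivity), hch]
      apply ENNReal.ofReal_le_ofReal
      refine (ContinuousLinearMap.opNorm_comp_le _ _).trans ?_
      gcongr
      exact hTb _
  have hbs : ball x R ⊆ closedBall (0 : ℂ) ρ := ball_subset_closedBall.trans hball
  have hen : ∫⁻ z in ball x R, ‖fderiv ℝ (fun z => T (F z)) z‖ₑ ^ 2 ≤
      ENNReal.ofReal (C₀ ^ 2 * (4 * (2 + 16 * C))) := by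
    have hFm : ∀ e : ℂ, AEStronglyMeasurable (fun z => fderiv ℝ F z e) (volume.restrict (ball x R)) :=
      fun e => ((hF1.continuous_fderiv (by simp)).clm_apply
        continuous_const).aestronglyMeasurable
    have m1 : AEMeasurable (fun z => ‖fderiv ℝ F z 1 - g₁ z‖ₑ ^ 2) (volume.restrict (ball x R)) :=
      (((hFm 1).sub hd.hg₁.aestronglyMeasurable.restrict).enorm).pow_const 2
    have m2 : AEMeasurable (fun z => ‖fderiv ℝ F z I - g₂ z‖ₑ ^ 2) (volume.restrict (ball x R)) :=
      (((hFm I).sub hd.hg₂.aestronglyMeasurable.restrict).enorm).pow_const 2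
    have m3 : AEMeasurable (fun z => ‖fderiv ℝ F z 1 - g₁ z‖ₑ ^ 2 + ‖fderiv ℝ F z I - g₂ z‖ₑ ^ 2)
      (volume.restrict (ball x R)) := m1.add m2
    refine (setLIntegral_mono' isOpen_ball.measurableSet hpt).trans ?_
    rw [lintegral_const_mul' _ _ ENNReal.ofReal_ne_top, lintegral_const_mul' _ _ (by norm_num),
      lintegral_add_left' m3, lintegral_add_left' m1]
    have b1 := (lintegral_mono_set (μ := volume) (f := fun z => ‖fderiv ℝ F z 1 - g₁ z‖ₑ ^ 2) hbs).trans hF3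
    have b2 := (lintegral_mono_set (μ := volume) (f := fun z => ‖fderiv ℝ F z I - g₂ z‖ₑ ^ 2) hbs).trans hF4
    have b3 : ∫⁻ z in ball x R, (f ⁻¹' closedBall w₀ (4 * M)).indicator
          (fun z => ‖g₁ z‖ₑ ^ 2 + ‖g₂ z‖ₑ ^ 2) z ≤ ENNReal.ofReal (C * (4 * M) ^ 2) := by
      refine (setLIntegral_le_lintegral _ _).trans ?_
      rw [lintegral_indicator hmeas]
      exact hE w₀ (4 * M) (by positivity)
    calc _ ≤ ENNReal.ofReal ((C₀ / M) ^ 2) * (4 * (ENNReal.ofReal ε + ENNReal.ofReal ε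
            + ENNReal.ofReal (C * (4 * M) ^ 2))) := by gcongr
      _ = ENNReal.ofReal ((C₀ / M) ^ 2 * (4 * (ε + ε + C * (4 * M) ^ 2))) := by
          rw [ENNReal.ofReal_mul (p := (C₀ / M) ^ 2) (by positivity), ENNReal.ofReal_mul (p := 4) (by positivity),
            ENNReal.ofReal_add (by positivity) (by positivity),
            ENNReal.ofReal_add (by positivity) (by positivity), ENNReal.ofReal_ofNat]
      _ ≤ _ := by
          apply ENNReal.ofReal_le_ofReal
          calc (C₀ / M) ^ 2 * (4 * (ε + ε + C * (4 * M) ^ 2))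
              ≤ (C₀ / M) ^ 2 * (4 * (M ^ 2 + M ^ 2 + C * (4 * M) ^ 2)) := by gcongr
            _ = _ := by field_simp; ring
  have hfin := hLA.trans (mul_le_mul_right hen _)
  rw [← ENNReal.ofReal_mul (by positivity), ENNReal.ofReal_le_ofReal_iff (by positivity)] at hfin
  linarith

/-- Key lemma: weak quasisymmetry. -/
lemma qd_key (f : ℂ ≃ₜ ℂ) {g₁ g₂ : ℂ → ℂ} (hd : QdData f g₁ g₂) {C : ℝ} (hC : 0 ≤ C)
    (hE : ∀ (w₀ : ℂ) (ρ : ℝ), 0 < ρ →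
      ∫⁻ z in f ⁻¹' closedBall w₀ ρ, (‖g₁ z‖ₑ ^ 2 + ‖g₂ z‖ₑ ^ 2) ≤ ENNReal.ofReal (C * ρ ^ 2)) :
    ∃ δ : ℝ, 0 < δ ∧ δ < 1 ∧ ∀ (x p y : ℂ), x ≠ p → dist y x ≤ δ * dist p x →
      dist (f y) (f x) ≤ dist (f p) (f x) / 4 := by
  obtain ⟨N, hN⟩ := qd_key_bound f hd hC hE
  refine ⟨Real.exp (-(|N| + 1)), Real.exp_pos _, ?_, ?_⟩
  · rw [Real.exp_lt_one_iff]
    have := abs_nonneg N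
    linarith
  · intro x p y hxp hy
    by_contra hlt
    rw [not_le] at hlt
    have hR : 0 < dist p x := dist_pos.2 hxp.symm
    have hM : 0 < dist (f p) (f x) := dist_pos.2 (f.injective.ne hxp.symm)
    have hδ : Real.exp (-(|N| + 1)) < 1 := by
      rw [Real.exp_lt_one_iff]
      have := abs_nonneg N
      linarith
    have h := hN x p y (dist p x) (Real.exp (-(|N| + 1)) * dist p x) (dist (f p) (f x)) hM
      (by positivity) (by nlinarith) le_rfl le_rfl hy hlt
    rw [div_mul_cancel_right₀ hR.ne', Real.log_inv, Real.log_exp] at h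
    have := le_abs_self N
    linarith

def qdC (D : Set ℂ) (L : ℝ) (z w : ℂ) : Prop :=
  ∃ γ : ℝ → ℂ, (∃ K : ℝ≥0, LipschitzOnWith K γ (Set.Icc 0 1)) ∧
    (∀ t ∈ Set.Icc (0 : ℝ) 1, γ t ∈ D) ∧ γ 0 = z ∧ γ 1 = w ∧
    (∫ t in (0 : ℝ)..1, ‖deriv γ t‖ / Metric.infDist (γ t) (frontier D)) ≤ L

lemma qdC_int_nonneg (D : Set ℂ) (γ : ℝ → ℂ) :
    0 ≤ ∫ t in (0 : ℝ)..1, ‖deriv γ t‖ / Metric.infDist (γ t) (frontier D) :=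
  intervalIntegral.integral_nonneg zero_le_one
    fun _ _ => div_nonneg (norm_nonneg _) Metric.infDist_nonneg

lemma qdC_qhDist {D : Set ℂ} {L : ℝ} {z w : ℂ} (h : qdC D L z w) : qhDist D z w ≤ L := by
  obtain ⟨γ, hL, hD, h0, h1, hi⟩ := h
  refine le_trans (csInf_le ⟨0, ?_⟩ ⟨γ, hL, hD, h0, h1, rfl⟩) hi
  rintro _ ⟨γ', _, _, _, _, rfl⟩
  exact qdC_int_nonneg D γ'

lemma qdC_trans {D : Set ℂ} {L₁ L₂ : ℝ} {z w u : ℂ} (h₁ : qdC D L₁ z w) (h₂ : qdC D L₂ w u) :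
    qdC D (L₁ + L₂) z u := by
  obtain ⟨γ₁, ⟨K₁, hK₁⟩, hD₁, h10, h11, hi₁⟩ := h₁
  obtain ⟨γ₂, ⟨K₂, hK₂⟩, hD₂, h20, h21, hi₂⟩ := h₂
  have hn₁ := (qdC_int_nonneg D γ₁).trans hi₁
  have hn₂ := (qdC_int_nonneg D γ₂).trans hi₂
  set γ : ℝ → ℂ := fun t => γ₁ (min (2 * t) 1) + (γ₂ (max (2 * t - 1) 0) - w) with hγ
  have e₁ : ∀ t : ℝ, t ≤ 1 / 2 → γ t = γ₁ (2 * t) := by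
    intro t ht
    simp only [hγ]
    rw [min_eq_left (by linarith), max_eq_right (by linarith), h20]
    simp
  have e₂ : ∀ t : ℝ, 1 / 2 ≤ t → γ t = γ₂ (2 * t - 1) := by
    intro t ht
    simp only [hγ]
    rw [min_eq_right (by linarith), max_eq_left (by linarith), h11]
    simp
  refine ⟨γ, ?_, ?_, ?_, ?_, ?_⟩
  · have l1 : LipschitzOnWith 2 (fun t : ℝ => min (2 * t) 1) (Set.Icc 0 1) := by
      refine LipschitzOnWith.of_dist_le_mul fun x _ y _ => ?_
      rw [Real.dist_eq, Real.dist_eq]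
      calc |min (2 * x) 1 - min (2 * y) 1| ≤ max |2 * x - 2 * y| |1 - 1| :=
            abs_min_sub_min_le_max _ _ _ _
        _ = |2 * x - 2 * y| := by simp
        _ = (2 : ℝ≥0) * |x - y| := by rw [← mul_sub, abs_mul]; norm_num
    have l2 : LipschitzOnWith 2 (fun t : ℝ => max (2 * t - 1) 0) (Set.Icc 0 1) := by
      refine LipschitzOnWith.of_dist_le_mul fun x _ y _ => ?_
      rw [Real.dist_eq, Real.dist_eq]
      calc |max (2 * x - 1) 0 - max (2 * y - 1) 0| ≤ max |2 * x - 1 - (2 * y - 1)| |0 - 0| :=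
            abs_max_sub_max_le_max _ _ _ _
        _ = |2 * x - 2 * y| := by simp
        _ = (2 : ℝ≥0) * |x - y| := by rw [← mul_sub, abs_mul]; norm_num
    have m1 : Set.MapsTo (fun t : ℝ => min (2 * t) 1) (Set.Icc 0 1) (Set.Icc 0 1) := by
      intro t ht
      exact ⟨le_min (by linarith [ht.1]) zero_le_one, min_le_right _ _⟩
    have m2 : Set.MapsTo (fun t : ℝ => max (2 * t - 1) 0) (Set.Icc 0 1) (Set.Icc 0 1) := by
      intro t ht
      exact ⟨le_max_right _ _, max_le (by linarith [ht.2]) zero_le_one⟩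
    exact ⟨_, (hK₁.comp l1 m1).add ((hK₂.comp l2 m2).sub (LipschitzWith.const w).lipschitzOnWith)⟩
  · intro t ht
    rcases le_total t (1 / 2) with h | h
    · rw [e₁ t h]; exact hD₁ _ ⟨by linarith [ht.1], by linarith⟩
    · rw [e₂ t h]; exact hD₂ _ ⟨by linarith, by linarith [ht.2]⟩
  · rw [e₁ 0 (by norm_num)]; simpa using h10
  · rw [e₂ 1 (by norm_num)]
    norm_num
    exact h21
  · set G : ℝ → ℝ := fun t => ‖deriv γ t‖ / Metric.infDist (γ t) (frontier D) with hG
    set G₁ : ℝ → ℝ := fun t => ‖deriv γ₁ t‖ / Metric.infDist (γ₁ t) (frontier D) with hG₁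
    set G₂ : ℝ → ℝ := fun t => ‖deriv γ₂ t‖ / Metric.infDist (γ₂ t) (frontier D) with hG₂
    by_cases hint : IntervalIntegrable G volume 0 1
    · have i1 : IntervalIntegrable G volume 0 (1 / 2) :=
        hint.mono_set (by rw [uIcc_of_le (by norm_num), uIcc_of_le (by norm_num)]
                          exact Icc_subset_Icc le_rfl (by norm_num))
      have i2 : IntervalIntegrable G volume (1 / 2) 1 :=
        hint.mono_set (by rw [uIcc_of_le (by norm_num), uIcc_of_le (by norm_num)]
                          exact Icc_subset_Icc (by norm_num) le_rfl)
      rw [← intervalIntegral.integral_add_adjacent_intervals i1 i2]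
      have s1 : ∫ t in (0 : ℝ)..(1 / 2), G t = ∫ t in (0 : ℝ)..1, G₁ t := by
        have : ∫ t in (0 : ℝ)..(1 / 2), G t = ∫ t in (0 : ℝ)..(1 / 2), 2 * G₁ (2 * t) := by
          refine intervalIntegral.integral_congr_Ioo_of_le (by norm_num) fun t ht => ?_
          have hev : γ =ᶠ[𝓝 t] fun s => γ₁ (2 * s) := by
            filter_upwards [Iio_mem_nhds ht.2] with s hs using e₁ s hs.le
          have hd := hev.deriv_eq
          rw [deriv_comp_mul_left] at hd
          simp only [hG, hG₁, hd, e₁ t ht.2.le, norm_smul]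
          norm_num
          ring
        rw [this, intervalIntegral.integral_const_mul,
          intervalIntegral.integral_comp_mul_left _ (by norm_num)]
        norm_num
        ring
      have s2 : ∫ t in (1 / 2 : ℝ)..1, G t = ∫ t in (0 : ℝ)..1, G₂ t := by
        have : ∫ t in (1 / 2 : ℝ)..1, G t = ∫ t in (1 / 2 : ℝ)..1, 2 * G₂ (2 * t - 1) := by
          refine intervalIntegral.integral_congr_Ioo_of_le (by norm_num) fun t ht => ?_
          have hev : γ =ᶠ[𝓝 t] fun s => γ₂ (2 * s - 1) := by
            filter_upwards [Ioi_mem_nhds ht.1] with s hs using e₂ s (le_of_lt hs)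
          have hd := hev.deriv_eq
          rw [deriv_comp_mul_left 2 (fun s => γ₂ (s - 1)), deriv_comp_sub_const] at hd
          simp only [hG, hG₂, hd, e₂ t ht.1.le, norm_smul]
          norm_num
          ring
        rw [this, intervalIntegral.integral_const_mul,
          intervalIntegral.integral_comp_mul_sub _ (by norm_num)]
        norm_num
        ring
      rw [s1, s2]
      exact add_le_add hi₁ hi₂
    · rw [intervalIntegral.integral_undef hint]
      positivity

lemma qdC_segment {D : Set ℂ} {z w : ℂ} {m : ℝ} (hm : 0 < m) (hzw : dist w z ≤ m / 4)
    (hs : segment ℝ z w ⊆ D) (hd : ∀ v ∈ segment ℝ z w, 3 * m / 4 ≤ infDist v (frontier D)) :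
    qdC D 1 z w := by
  have hseg : ∀ t ∈ Set.Icc (0 : ℝ) 1, z + (t : ℝ) • (w - z) ∈ segment ℝ z w := by
    intro t ht
    rw [segment_eq_image']
    exact ⟨t, ht, rfl⟩
  have hder : ∀ t : ℝ, HasDerivAt (fun t : ℝ => z + t • (w - z)) (w - z) t := by
    intro t
    simpa using ((hasDerivAt_id t).smul_const (w - z)).const_add z
  refine ⟨fun t => z + t • (w - z), ⟨‖w - z‖₊, ?_⟩, fun t ht => hs (hseg t ht), by simp, by simp, ?_⟩
  · refine LipschitzOnWith.of_dist_le_mul fun x _ y _ => ?_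
    rw [dist_eq_norm, add_sub_add_left_eq_sub, ← sub_smul, norm_smul, dist_eq_norm, mul_comm]
    rfl
  · have := intervalIntegral.norm_integral_le_of_norm_le_const (a := (0 : ℝ)) (b := 1) (C := 1)
      (f := fun t => ‖deriv (fun t : ℝ => z + t • (w - z)) t‖ /
        Metric.infDist (z + t • (w - z)) (frontier D)) (by
        intro t ht
        rw [uIoc_of_le zero_le_one] at ht
        have h1 := hd _ (hseg t ⟨ht.1.le, ht.2⟩)
        rw [(hder t).deriv, Real.norm_of_nonneg (div_nonneg (norm_nonneg _) infDist_nonneg),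
          div_le_one (by linarith), ← dist_eq_norm]
        linarith)
    refine (Real.le_norm_self _).trans (this.trans (by norm_num))

lemma qd_frontier (f : ℂ ≃ₜ ℂ) : frontier (f '' ball 0 1) = f '' sphere 0 1 := by
  rw [← f.image_frontier, frontier_ball _ one_ne_zero]

lemma qd_step (f : ℂ ≃ₜ ℂ) {δ : ℝ} (h0 : 0 < δ)
    (hk : ∀ x p y : ℂ, x ≠ p → dist y x ≤ δ * dist p x →
      dist (f y) (f x) ≤ dist (f p) (f x) / 4)
    {x y : ℂ} (hx : ‖x‖ < 1) (hy : dist y x ≤ δ * (1 - ‖x‖)) :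
    qdC (f '' ball 0 1) 1 (f x) (f y) := by
  have hF := qd_frontier f
  have hc : IsCompact (f '' sphere (0 : ℂ) 1) := (isCompact_sphere 0 1).image f.continuous
  have hne : (f '' sphere (0 : ℂ) 1).Nonempty := ⟨f 1, 1, by simp, rfl⟩
  obtain ⟨_, ⟨p, hp, rfl⟩, hpm⟩ := hc.exists_infDist_eq_dist hne (f x)
  have hp1 : ‖p‖ = 1 := by simpa using hp
  have hxp : x ≠ p := by rintro rfl; linarith
  have hpx : 1 - ‖x‖ ≤ dist p x := by
    rw [dist_eq_norm, ← hp1]; exact norm_sub_norm_le p x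
  have hm : 0 < dist (f p) (f x) := dist_pos.2 fun h => hxp (f.injective h).symm
  have h1 := hk x p y hxp (hy.trans (mul_le_mul_of_nonneg_left hpx h0.le))
  rw [dist_comm (f x)] at hpm
  have hd : ∀ v ∈ segment ℝ (f x) (f y),
      3 * dist (f p) (f x) / 4 ≤ infDist v (f '' sphere (0 : ℂ) 1) := by
    intro v hv
    have hv' : v ∈ closedBall (f x) (dist (f p) (f x) / 4) :=
      (convex_closedBall _ _).segment_subset (mem_closedBall_self (by positivity)) h1 hv
    have h2 := infDist_le_infDist_add_dist (s := f '' sphere (0 : ℂ) 1) (x := f x) (y := v)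
    rw [mem_closedBall, dist_comm] at hv'
    linarith
  refine qdC_segment hm h1 ?_ (by rw [hF]; exact hd)
  intro v hv
  by_contra hvD
  have hv1 : 1 ≤ dist (f.symm v) 0 := by
    by_contra! h
    exact hvD ⟨f.symm v, h, by simp⟩
  obtain ⟨a, ha, hfa⟩ := qd_meet f (convex_segment (𝕜 := ℝ) (f x) (f y)).isPreconnected
    (left_mem_segment ℝ _ _) hv (x := 0) (r := 1) (by simpa using hx.le) hv1
  have h3 := hd _ hfa
  rw [infDist_zero_of_mem (mem_image_of_mem f ha)] at h3
  linarith

lemma qd_chain (f : ℂ ≃ₜ ℂ) {δ : ℝ} (h0 : 0 < δ) (h1 : δ < 1)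
    (hk : ∀ x p y : ℂ, x ≠ p → dist y x ≤ δ * dist p x →
      dist (f y) (f x) ≤ dist (f p) (f x) / 4) (n : ℕ) :
    ∀ x : ℂ, ‖x‖ < 1 → 1 ≤ (1 + δ) ^ n * (1 - ‖x‖) → qdC (f '' ball 0 1) n (f x) (f 0) := by
  induction n with
  | zero =>
    intro x hx h
    have : x = 0 := norm_le_zero_iff.1 (by simpa using h)
    subst this
    refine ⟨fun _ => f 0, ⟨0, (LipschitzWith.const _).lipschitzOnWith⟩,
      fun _ _ => ⟨0, by simp, rfl⟩, rfl, rfl, by simp⟩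
  | succ n ih =>
    intro x hx h
    have hn : ((n + 1 : ℕ) : ℝ) = 1 + n := by push_cast; ring
    rw [hn]
    have hpow : (1 : ℝ) ≤ (1 + δ) ^ n := one_le_pow₀ (by linarith)
    rcases le_or_gt ‖x‖ (δ * (1 - ‖x‖)) with hc | hc
    · exact qdC_trans (qd_step f h0 hk hx (by simpa using hc)) (ih 0 (by simp) (by simpa using hpow))
    · have hd : 0 < 1 - ‖x‖ := by linarith
      have hx0 : 0 < ‖x‖ := lt_trans (mul_pos h0 hd) hc
      set x' : ℂ := ((‖x‖ - δ * (1 - ‖x‖)) / ‖x‖ : ℝ) • x with hx'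
      have hnx' : ‖x'‖ = ‖x‖ - δ * (1 - ‖x‖) := by
        rw [hx', norm_smul, Real.norm_of_nonneg (div_nonneg (by linarith) hx0.le)]
        field_simp
      have hdx : dist x' x ≤ δ * (1 - ‖x‖) := by
        have : x' - x = (-(δ * (1 - ‖x‖)) / ‖x‖ : ℝ) • x := by
          rw [hx']
          nth_rewrite 5 [← one_smul ℝ x]
          rw [← sub_smul]
          congr 1
          field_simp
          ring
        rw [dist_eq_norm, this, norm_smul, norm_div, norm_neg, norm_norm,
          Real.norm_of_nonneg (mul_pos h0 hd).le]
        rw [div_mul_cancel₀ _ hx0.ne']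
      refine qdC_trans (qd_step f h0 hk hx hdx) (ih x' (by rw [hnx']; nlinarith) ?_)
      rw [hnx']
      calc (1 : ℝ) ≤ (1 + δ) ^ (n + 1) * (1 - ‖x‖) := h
        _ = _ := by ring

lemma qd_holder (f : ℂ ≃ₜ ℂ) {δ : ℝ} (h0 : 0 < δ) (h1 : δ < 1)
    (hk : ∀ x p y : ℂ, x ≠ p → dist y x ≤ δ * dist p x →
      dist (f y) (f x) ≤ dist (f p) (f x) / 4) {B : ℝ}
    (hB : ∀ p y : ℂ, ‖p‖ = 1 → dist y p ≤ 1 → dist (f y) (f p) ≤ B) (n : ℕ) :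
    ∀ p y : ℂ, ‖p‖ = 1 → dist y p ≤ δ ^ n → dist (f y) (f p) ≤ B / 4 ^ n := by
  induction n with
  | zero => intro p y hp hy; simpa using hB p y hp (by simpa using hy)
  | succ n ih =>
    intro p y hp hy
    have hδ : 0 < δ ^ n := pow_pos h0 n
    have hq : dist (p + (δ ^ n : ℝ)) p = δ ^ n := by
      rw [dist_eq_norm, add_sub_cancel_left, Complex.norm_real, Real.norm_of_nonneg hδ.le]
    have h2 := hk p (p + (δ ^ n : ℝ)) y
      (fun h => by rw [← h, dist_self] at hq; linarith) (by rw [hq, ← pow_succ']; exact hy)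
    have h3 := ih p (p + (δ ^ n : ℝ)) hp hq.le
    calc _ ≤ _ := h2
      _ ≤ (B / 4 ^ n) / 4 := by gcongr
      _ = _ := by rw [pow_succ, div_div]

lemma qd_geom (f : ℂ ≃ₜ ℂ) {δ : ℝ} (h0 : 0 < δ) (h1 : δ < 1)
    (hk : ∀ x p y : ℂ, x ≠ p → dist y x ≤ δ * dist p x →
      dist (f y) (f x) ≤ dist (f p) (f x) / 4) : QHBC (f '' ball 0 1) := by
  have hF := qd_frontier f
  have hc : IsCompact (f '' sphere (0 : ℂ) 1) := (isCompact_sphere 0 1).image f.continuous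
  have hne : (f '' sphere (0 : ℂ) 1).Nonempty := ⟨f 1, 1, by simp, rfl⟩
  have hpos : ∀ x : ℂ, ‖x‖ < 1 → 0 < infDist (f x) (f '' sphere (0 : ℂ) 1) := by
    intro x hx
    refine (hc.isClosed.notMem_iff_infDist_pos hne).1 ?_
    rintro ⟨p, hp, hpx⟩
    rw [f.injective hpx] at hp
    have : ‖x‖ = 1 := by simpa using hp
    linarith
  obtain ⟨B, hB0, hB⟩ : ∃ B : ℝ, 0 < B ∧ ∀ p y : ℂ, ‖p‖ = 1 → dist y p ≤ 1 →
      dist (f y) (f p) ≤ B := by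
    have hcb : IsCompact (f '' closedBall (0 : ℂ) 2) :=
      (isCompact_closedBall 0 2).image f.continuous
    refine ⟨diam (f '' closedBall (0 : ℂ) 2) + 1, by linarith [diam_nonneg (s := f '' closedBall (0 : ℂ) 2)], ?_⟩
    intro p y hp hy
    have : dist (f y) (f p) ≤ diam (f '' closedBall (0 : ℂ) 2) := by
      refine dist_le_diam_of_mem hcb.isBounded (mem_image_of_mem f ?_) (mem_image_of_mem f ?_)
      · rw [mem_closedBall]
        calc dist y 0 ≤ dist y p + dist p 0 := dist_triangle _ _ _
          _ ≤ 1 + 1 := by rw [dist_zero_right p, hp]; linarith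
          _ = 2 := by norm_num
      · rw [mem_closedBall, dist_zero_right, hp]; norm_num
    linarith
  set m₀ := infDist (f 0) (f '' sphere (0 : ℂ) 1) with hm₀
  have hm₀p : 0 < m₀ := hpos 0 (by simp)
  set lq := Real.log (1 + δ) with hlq
  have hlqp : 0 < lq := Real.log_pos (by linarith)
  set ld := -Real.log δ with hld
  have hldp : 0 < ld := by have := Real.log_neg h0 h1; linarith
  have hl4 : 0 < Real.log 4 := Real.log_pos (by norm_num)
  set A := ld / lq with hA
  have hAp : 0 < A := div_pos hldp hlqp
  refine ⟨A / Real.log 4, A * (Real.log (B / m₀) / Real.log 4 + 1) + 1, f 0, ⟨0, by simp, rfl⟩, ?_⟩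
  rintro _ ⟨x, hx, rfl⟩
  have hx1 : ‖x‖ < 1 := by simpa using hx
  rw [hF]
  set m := infDist (f x) (f '' sphere (0 : ℂ) 1) with hm
  have hmp : 0 < m := hpos x hx1
  set t := 1 - ‖x‖ with ht
  have htp : 0 < t := by linarith
  have ht1 : t ≤ 1 := by linarith [norm_nonneg x]
  obtain ⟨n, hn1, hn2⟩ := exists_nat_pow_near_of_lt_one htp ht1 h0 h1
  obtain ⟨N, hN1, hN2⟩ := exists_nat_pow_near (one_le_inv₀ htp |>.2 ht1) (by linarith : 1 < 1 + δ)
  have hq := qdC_qhDist (qd_chain f h0 h1 hk (N + 1) x hx1 (by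
    have := mul_le_mul_of_nonneg_right hN2.le htp.le
    rwa [inv_mul_cancel₀ htp.ne'] at this))
  -- bound on m
  have hmB : m ≤ B / 4 ^ n := by
    obtain ⟨p, hp, hpx⟩ : ∃ p : ℂ, ‖p‖ = 1 ∧ dist x p = t := by
      by_cases hx0 : x = 0
      · exact ⟨1, by simp, by simp [hx0, ht]⟩
      · have hxn : 0 < ‖x‖ := norm_pos_iff.2 hx0
        refine ⟨(‖x‖⁻¹ : ℝ) • x, ?_, ?_⟩
        · rw [norm_smul, norm_inv, norm_norm, inv_mul_cancel₀ hxn.ne']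
        · have : x - (‖x‖⁻¹ : ℝ) • x = (1 - ‖x‖⁻¹ : ℝ) • x := by rw [sub_smul, one_smul]
          rw [dist_eq_norm, this, norm_smul, Real.norm_eq_abs, abs_of_nonpos, ht]
          · field_simp
            ring
          · have := (one_le_inv₀ hxn).2 hx1.le
            linarith
    exact (infDist_le_dist_of_mem (mem_image_of_mem f (by simpa using hp))).trans
      (qd_holder f h0 h1 hk hB n p x hp (hpx ▸ hn2))
  have hlm : n * Real.log 4 ≤ Real.log B - Real.log m := by
    have := Real.log_le_log hmp hmB
    rw [Real.log_div hB0.ne' (by positivity), Real.log_pow] at this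
    linarith
  have hlt1 : N * lq ≤ -Real.log t := by
    have := Real.log_le_log (by positivity) hN1
    rwa [Real.log_pow, Real.log_inv] at this
  have hlt2 : -Real.log t ≤ (n + 1) * ld := by
    have := Real.log_le_log (by positivity) hn1.le
    rw [Real.log_pow] at this
    push_cast at this
    rw [hld]; linarith
  have hNA : (N : ℝ) ≤ A * (n + 1) := by
    rw [hA, div_mul_eq_mul_div, le_div_iff₀ hlqp]; linarith
  have hnn : (n : ℝ) ≤ (Real.log B - Real.log m) / Real.log 4 := by
    rwa [le_div_iff₀ hl4]
  have hfin : (N : ℝ) ≤ A * ((Real.log B - Real.log m) / Real.log 4 + 1) :=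
    hNA.trans (mul_le_mul_of_nonneg_left (by linarith) hAp.le)
  rw [Real.log_div hm₀p.ne' hmp.ne', Real.log_div hB0.ne' hm₀p.ne']
  push_cast at hq
  calc _ ≤ _ := hq
    _ ≤ A * ((Real.log B - Real.log m) / Real.log 4 + 1) + 1 := by linarith
    _ = _ := by field_simp; ring

lemma qd_main (f : ℂ → ℂ) (hf : IsQCOfPlane f) : QHBC (f '' Metric.ball 0 1) := by
  obtain ⟨⟨F, rfl⟩, g₁, g₂, ⟨_, hl₁, hl₂, hw⟩, hs, μ, _, ⟨k, hk1, hμ⟩, hB⟩ := hf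
  rw [locallyIntegrableOn_univ] at hl₁ hl₂
  have hd : QdData F g₁ g₂ :=
    { hf := F.continuous
      hg₁ := hl₁
      hg₂ := hl₂
      hs₁ := fun K hK => (hs K hK).1
      hs₂ := fun K hK => (hs K hK).2
      hw₁ := fun φ h1 h2 => by simpa using (hw φ h1 h2 (subset_univ _)).1
      hw₂ := fun φ h1 h2 => by simpa using (hw φ h1 h2 (subset_univ _)).2 }
  have hk1' : max k 0 < 1 := max_lt hk1 zero_lt_one
  have hk0' : 0 ≤ max k 0 := le_max_right _ _
  have hpt : ∀ᵐ z, 0 ≤ qdW (g₁ z) (g₂ z) ∧ ‖g₁ z‖ ^ 2 + ‖g₂ z‖ ^ 2 ≤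
      (2 * (1 + (max k 0) ^ 2) / (1 - (max k 0) ^ 2)) * qdW (g₁ z) (g₂ z) := by
    filter_upwards [hμ, hB] with z h1 h2
    exact qd_pointwise hk1' hk0' (h1.trans (le_max_left _ _)) h2
  obtain ⟨C, hC, hE⟩ := qd_energy F hd
    (K := 2 * (1 + (max k 0) ^ 2) / (1 - (max k 0) ^ 2))
    (div_nonneg (by positivity) (by nlinarith)) (hpt.mono fun z h => h.1) (hpt.mono fun z h => h.2)
  obtain ⟨δ, h0, h1, hk⟩ := qd_key F hd hC hE
  exact qd_geom F h0 h1 hk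

/-- every quasidisk satisfies the quasihyperbolic boundary condition. -/
theorem quasidisk_qhbc (f : ℂ → ℂ) (hf : IsQCOfPlane f) :
    QHBC (f '' Metric.ball 0 1) := by
  exact qd_main f hf
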